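/- arXiv:1906.02612 — 13 statements merged into one kernel-verified Lean document; each statement's English description precedes it below -/
import Mathlib

section
/- Let A ∈ [0,1), and on the real line write f_A(α) = θ_A(α) + iτ_A(α) with θ_A(α) = Re f_A(α) and τ_A(α) = Im f_A(α), where f_A(α) = 2i·Log((1+Ae^{−iα})/(1−Ae^{−iα})). Set q = (1+A²)/(1−A²). Then θ_A is differentiable on ℝ and for every α ∈ ℝ one has q·θ_A′(α) = sinh(τ_A(α)). Equivalently, Crapper's function f_A is an exact solution of Levi-Civita's pure capillary wave equation on the boundary of the lower half-plane with surface tension parameter q. -/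
open Complex Real

/-- Crapper's analytic function `f_A`, evaluated at a complex point. -/
noncomputable def crapperF (A : ℝ) (w : ℂ) : ℂ :=
  2 * Complex.I *
    Complex.log ((1 + (A : ℂ) * Complex.exp (-Complex.I * w)) /
      (1 - (A : ℂ) * Complex.exp (-Complex.I * w)))

theorem crapper_aux (A : ℝ) (hA : A ∈ Set.Ico (0 : ℝ) 1) (α : ℝ) :
    (crapperF A (α : ℂ)).re = 2 * Real.arctan (2 * A / (1 - A ^ 2) * Real.sin α) ∧
    Real.exp ((crapperF A (α : ℂ)).im) =
      (1 + A ^ 2 + 2 * A * Real.cos α) / (1 + A ^ 2 - 2 * A * Real.cos α) := by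
  obtain ⟨h0, h1⟩ := hA
  have hsc := Real.sin_sq_add_cos_sq α
  have hc1 := Real.cos_le_one α
  have hc2 := Real.neg_one_le_cos α
  have hm : 0 < 1 + A ^ 2 - 2 * A * Real.cos α := by nlinarith [mul_nonneg h0 (sub_nonneg.2 hc1)]
  have hp : 0 < 1 + A ^ 2 + 2 * A * Real.cos α := by
    nlinarith [mul_nonneg h0 (by linarith : 0 ≤ Real.cos α + 1)]
  have hA2 : 0 < 1 - A ^ 2 := by nlinarith
  have he : Complex.exp (-Complex.I * α) = ⟨Real.cos α, -Real.sin α⟩ := by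
    have : -Complex.I * α = ((-α : ℝ) : ℂ) * Complex.I := by push_cast; ring
    rw [this]
    apply Complex.ext
    · rw [Complex.exp_ofReal_mul_I_re, Real.cos_neg]
    · rw [Complex.exp_ofReal_mul_I_im, Real.sin_neg]
  unfold crapperF
  rw [he]
  set r : ℂ := (1 + (A : ℂ) * ⟨Real.cos α, -Real.sin α⟩) /
      (1 - (A : ℂ) * ⟨Real.cos α, -Real.sin α⟩) with hr
  have hn : Complex.normSq (1 - (A : ℂ) * ⟨Real.cos α, -Real.sin α⟩) =
      1 + A ^ 2 - 2 * A * Real.cos α := by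
    simp [Complex.normSq_apply]
    linear_combination A ^ 2 * hsc
  have hn' : Complex.normSq (1 + (A : ℂ) * ⟨Real.cos α, -Real.sin α⟩) =
      1 + A ^ 2 + 2 * A * Real.cos α := by
    simp [Complex.normSq_apply]
    linear_combination A ^ 2 * hsc
  have hre : r.re = (1 - A ^ 2) / (1 + A ^ 2 - 2 * A * Real.cos α) := by
    rw [hr, Complex.div_re, hn, ← add_div]
    congr 1
    simp
    linear_combination -A ^ 2 * hsc
  have him : r.im = -(2 * A * Real.sin α) / (1 + A ^ 2 - 2 * A * Real.cos α) := by
    rw [hr, Complex.div_im, hn, ← sub_div]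
    congr 1
    simp
    ring
  have hrn : Complex.normSq r =
      (1 + A ^ 2 + 2 * A * Real.cos α) / (1 + A ^ 2 - 2 * A * Real.cos α) := by
    rw [hr, Complex.normSq_div, hn, hn']
  have hre0 : 0 < r.re := by rw [hre]; positivity
  have hr0 : r ≠ 0 := by
    intro h
    rw [h] at hre0
    simp at hre0
  constructor
  · have harg : Complex.arg r = Real.arctan (r.im / r.re) := by
      have h := abs_lt.1 (Complex.abs_arg_lt_pi_div_two_iff.2 (Or.inl hre0))
      rw [← Complex.tan_arg, Real.arctan_tan h.1 h.2]
    have : r.im / r.re = -(2 * A / (1 - A ^ 2) * Real.sin α) := by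
      rw [hre, him]
      field_simp
    rw [this, Real.arctan_neg] at harg
    simp [Complex.log_im, harg]
  · rw [← hrn, Complex.normSq_eq_norm_sq]
    have : (2 * Complex.I * Complex.log r).im = Real.log ‖r‖ + Real.log ‖r‖ := by
      simp [Complex.log_re]
      ring
    rw [this, Real.exp_add, Real.exp_log (norm_pos_iff.2 hr0), sq]

/-- For `A ∈ [0,1)`, writing `f_A(α) = θ_A(α) + i τ_A(α)` on the real line
and `q = (1+A²)/(1−A²)`, the function `θ_A` is differentiable on `ℝ` and satisfies
Levi-Civita's pure capillary wave equation `q·θ_A′(α) = sinh(τ_A(α))` for every `α`. -/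
theorem crapper_solves_leviCivita (A : ℝ) (hA : A ∈ Set.Ico (0 : ℝ) 1)
    (θ τ : ℝ → ℝ)
    (hθ : ∀ α : ℝ, θ α = (crapperF A (α : ℂ)).re)
    (hτ : ∀ α : ℝ, τ α = (crapperF A (α : ℂ)).im)
    (q : ℝ) (hq : q = (1 + A ^ 2) / (1 - A ^ 2)) :
    Differentiable ℝ θ ∧ ∀ α : ℝ, q * deriv θ α = Real.sinh (τ α) := by
  have hd : ∀ α : ℝ, HasDerivAt θ (2 * (1 / (1 + (2 * A / (1 - A ^ 2) * Real.sin α) ^ 2) *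
      (2 * A / (1 - A ^ 2) * Real.cos α))) α := by
    intro α
    have h : θ = fun α => 2 * Real.arctan (2 * A / (1 - A ^ 2) * Real.sin α) := by
      funext x
      rw [hθ, (crapper_aux A hA x).1]
    rw [h]
    exact (((Real.hasDerivAt_sin α).const_mul _).arctan).const_mul 2
  refine ⟨fun α => (hd α).differentiableAt, fun α => ?_⟩
  rw [(hd α).deriv, Real.sinh_eq, Real.exp_neg, hτ, (crapper_aux A hA α).2, hq]
  obtain ⟨h0, h1⟩ := hA
  have hsc := Real.sin_sq_add_cos_sq α
  have hc1 := Real.cos_le_one α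
  have hc2 := Real.neg_one_le_cos α
  have hm : 0 < 1 + A ^ 2 - 2 * A * Real.cos α := by nlinarith [mul_nonneg h0 (sub_nonneg.2 hc1)]
  have hp : 0 < 1 + A ^ 2 + 2 * A * Real.cos α := by
    nlinarith [mul_nonneg h0 (by linarith : 0 ≤ Real.cos α + 1)]
  have hA2 : 0 < 1 - A ^ 2 := by nlinarith
  have hD : 1 + (2 * A / (1 - A ^ 2) * Real.sin α) ^ 2 =
      (1 + A ^ 2 - 2 * A * Real.cos α) * (1 + A ^ 2 + 2 * A * Real.cos α) / (1 - A ^ 2) ^ 2 := by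
    field_simp
    linear_combination 4 * A ^ 2 * hsc
  rw [hD]
  generalize Real.cos α = c at *
  field_simp
  ring
end

section
/- There exist A ∈ (0,1) and α ∈ (0,π) such that the Crapper wave profile z_A satisfies z_A(α) = z_A(−α). That is, for sufficiently large values of the parameter A < 1, the Crapper curve self-intersects (it has a splash point on the imaginary axis). -/
open Complex Real

/-- The Crapper wave profile `z_A(α) = α + 4i/(1+Ae^{−iα}) − 4i`. -/
noncomputable def crapperZ (A : ℝ) (α : ℝ) : ℂ :=
  (α : ℂ) + 4 * Complex.I / (1 + (A : ℂ) * Complex.exp (-Complex.I * (α : ℂ)))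
    - 4 * Complex.I

/-- There exist `A ∈ (0,1)` and `α ∈ (0,π)` such that the Crapper curve
self-intersects: `z_A(α) = z_A(−α)`. -/
theorem crapper_selfIntersects :
    ∃ A ∈ Set.Ioo (0 : ℝ) 1, ∃ α ∈ Set.Ioo (0 : ℝ) Real.pi,
      crapperZ A α = crapperZ A (-α) := by
  have hc : ContinuousOn (fun A : ℝ => 8 * A - Real.pi * (1 + A ^ 2)) (Set.Icc 0 1) := by
    fun_prop
  have hpi := Real.pi_pos
  have hpi4 := Real.pi_lt_four
  obtain ⟨A, hA, h⟩ := intermediate_value_Ioo (zero_le_one' ℝ) hc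
    (show (0 : ℝ) ∈ Set.Ioo _ _ from ⟨by norm_num; exact hpi, by norm_num; linarith⟩)
  refine ⟨A, hA, Real.pi / 2, ⟨by linarith, by linarith⟩, ?_⟩
  have hC : 8 * (A : ℂ) = (Real.pi : ℂ) * (1 + (A : ℂ) ^ 2) := by
    have h' : 8 * A = Real.pi * (1 + A ^ 2) := by
      have := h
      simp only at this
      linarith
    exact_mod_cast h'
  have e1 : Complex.exp (-Complex.I * ((Real.pi / 2 : ℝ) : ℂ)) = -Complex.I := by
    refine Eq.trans ?_ Complex.exp_neg_pi_div_two_mul_I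
    congr 1
    push_cast
    ring
  have e2 : Complex.exp (-Complex.I * ((-(Real.pi / 2) : ℝ) : ℂ)) = Complex.I := by
    refine Eq.trans ?_ Complex.exp_pi_div_two_mul_I
    congr 1
    push_cast
    ring
  have n1 : (1 : ℂ) + (A : ℂ) * -Complex.I ≠ 0 := by
    intro h0
    have := congrArg Complex.re h0
    simp at this
  have n2 : (1 : ℂ) + (A : ℂ) * Complex.I ≠ 0 := by
    intro h0
    have := congrArg Complex.re h0
    simp at this
  unfold crapperZ
  rw [e1, e2]
  have key : 4 * Complex.I / (1 + (A : ℂ) * Complex.I)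
      = Real.pi + 4 * Complex.I / (1 + (A : ℂ) * -Complex.I) := by
    rw [div_eq_iff n2, add_mul, div_mul_eq_mul_div, ← sub_eq_iff_eq_add', eq_div_iff n1]
    linear_combination (1 : ℂ) * hC + (-8 * (A : ℂ) + Real.pi * (A : ℂ) ^ 2) * Complex.I_sq
  rw [key]
  push_cast
  ring
end

section
/- There exists A₀ ∈ (0,1) such that for every A ∈ [0,1), the restriction of the Crapper wave profile z_A to the interval [−π, π) is injective if and only if A < A₀. In other words, there is a critical parameter value A₀ (numerically A₀ ≈ 0.45467) below which the Crapper curve has no self-intersections and at or above which it does. -/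
open Complex Real

lemma crapper_D_pos {A : ℝ} (h0 : 0 ≤ A) (h1 : A < 1) (α : ℝ) :
    0 < 1 + A ^ 2 + 2 * A * Real.cos α := by
  nlinarith [Real.neg_one_le_cos α, mul_nonneg h0 (by linarith [Real.neg_one_le_cos α] : 0 ≤ Real.cos α + 1),
    pow_pos (sub_pos.2 h1) 2]

lemma crapper_eq {A : ℝ} (h0 : 0 ≤ A) (h1 : A < 1) (α : ℝ) :
    crapperZ A α = ((α - 4 * A * Real.sin α / (1 + A ^ 2 + 2 * A * Real.cos α) : ℝ) : ℂ)
      + ((4 * (1 + A * Real.cos α) / (1 + A ^ 2 + 2 * A * Real.cos α) - 4 : ℝ) : ℂ) * Complex.I := by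
  have hD := crapper_D_pos h0 h1 α
  have hDc : (1 + (A : ℂ) ^ 2 + 2 * A * Complex.cos α) ≠ 0 := by
    exact_mod_cast hD.ne'
  have he : Complex.exp (-Complex.I * (α : ℂ)) = Complex.cos α - Complex.sin α * Complex.I := by
    rw [show -Complex.I * (α : ℂ) = (-(α : ℂ)) * Complex.I by ring, Complex.exp_mul_I,
      Complex.cos_neg, Complex.sin_neg]
    ring
  have hcs := Complex.sin_sq_add_cos_sq (α : ℂ)
  have hprod : (1 + (A : ℂ) * (Complex.cos α - Complex.sin α * Complex.I)) *
      (1 + (A : ℂ) * (Complex.cos α + Complex.sin α * Complex.I))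
      = 1 + (A : ℂ) ^ 2 + 2 * A * Complex.cos α := by
    linear_combination (A : ℂ) ^ 2 * hcs - (A : ℂ) ^ 2 * Complex.sin α ^ 2 * Complex.I_sq
  have hne : (1 + (A : ℂ) * (Complex.cos α - Complex.sin α * Complex.I)) ≠ 0 := by
    intro h
    rw [h, zero_mul] at hprod
    exact hDc hprod.symm
  have hq : 4 * Complex.I / (1 + (A : ℂ) * (Complex.cos α - Complex.sin α * Complex.I))
      = 4 * Complex.I * (1 + (A : ℂ) * (Complex.cos α + Complex.sin α * Complex.I)) /
        (1 + (A : ℂ) ^ 2 + 2 * A * Complex.cos α) := by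
    rw [div_eq_div_iff hne hDc, ← hprod]
    ring
  unfold crapperZ
  rw [he, hq]
  push_cast
  linear_combination 4 * (A : ℂ) * Complex.sin α * (1 + (A : ℂ) ^ 2 + 2 * A * Complex.cos α)⁻¹ * Complex.I_sq

lemma crapper_eq_iff {A : ℝ} (h0 : 0 ≤ A) (h1 : A < 1) (α β : ℝ) :
    crapperZ A α = crapperZ A β ↔
      (α - 4 * A * Real.sin α / (1 + A ^ 2 + 2 * A * Real.cos α)
        = β - 4 * A * Real.sin β / (1 + A ^ 2 + 2 * A * Real.cos β)) ∧
      (4 * (1 + A * Real.cos α) / (1 + A ^ 2 + 2 * A * Real.cos α) - 4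
        = 4 * (1 + A * Real.cos β) / (1 + A ^ 2 + 2 * A * Real.cos β) - 4) := by
  rw [crapper_eq h0 h1, crapper_eq h0 h1, Complex.ext_iff]
  simp only [Complex.add_re, Complex.add_im, Complex.ofReal_re, Complex.ofReal_im,
    Complex.re_ofReal_mul, Complex.im_ofReal_mul, Complex.I_re, Complex.I_im, mul_zero, mul_one,
    add_zero, zero_add]

lemma crapper_inj_iff {A : ℝ} (h0 : 0 ≤ A) (h1 : A < 1) :
    Set.InjOn (crapperZ A) (Set.Ico (-Real.pi) Real.pi) ↔
      ∀ α ∈ Set.Ioo 0 Real.pi, α * (1 + A ^ 2 + 2 * A * Real.cos α) ≠ 4 * A * Real.sin α := by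
  constructor
  · intro h α hα he
    have hD := crapper_D_pos h0 h1 α
    have hx : 4 * A * Real.sin α / (1 + A ^ 2 + 2 * A * Real.cos α) = α := by
      rw [div_eq_iff hD.ne', he]
    have := h (x₁ := α) (x₂ := -α) ⟨by linarith [hα.1, hα.2], hα.2⟩
      ⟨by linarith [hα.1, hα.2], by linarith [hα.1, hα.2]⟩
      ((crapper_eq_iff h0 h1 _ _).2 ⟨by
        rw [Real.sin_neg, Real.cos_neg, mul_neg, neg_div, hx]; ring, by rw [Real.cos_neg]⟩)
    linarith [hα.1]
  · intro h α hα β hβ he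
    obtain ⟨hx, hy⟩ := (crapper_eq_iff h0 h1 _ _).1 he
    rcases h0.eq_or_lt with rfl | hA
    · simpa using hx
    have hDa := crapper_D_pos h0 h1 α
    have hDb := crapper_D_pos h0 h1 β
    have hc : Real.cos α = Real.cos β := by
      have hy' : 4 * (1 + A * Real.cos α) / (1 + A ^ 2 + 2 * A * Real.cos α)
        = 4 * (1 + A * Real.cos β) / (1 + A ^ 2 + 2 * A * Real.cos β) := by linarith
      rw [div_eq_div_iff hDa.ne' hDb.ne'] at hy'
      have h2 : A * (1 - A ^ 2) * (Real.cos α - Real.cos β) = 0 := by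
        linear_combination (-1 / 4) * hy'
      have h3 : A * (1 - A ^ 2) ≠ 0 := by
        apply ne_of_gt
        apply mul_pos hA
        nlinarith
      rcases mul_eq_zero.1 h2 with h4 | h4
      · exact absurd h4 h3
      · linarith
    have habs : |α| = |β| := by
      apply Real.injOn_cos ⟨abs_nonneg _, abs_le.2 ⟨hα.1, hα.2.le⟩⟩
        ⟨abs_nonneg _, abs_le.2 ⟨hβ.1, hβ.2.le⟩⟩
      simpa [Real.cos_abs] using hc
    rcases abs_eq_abs.1 habs with h5 | h5
    · exact h5
    subst h5
    rw [Real.sin_neg, Real.cos_neg, mul_neg, neg_div] at hx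
    have hx' : β = 4 * A * Real.sin β / (1 + A ^ 2 + 2 * A * Real.cos β) := by linarith
    rw [eq_div_iff hDb.ne'] at hx'
    rcases lt_trichotomy β 0 with hb | hb | hb
    · exfalso
      refine h (-β) ⟨by linarith, by linarith [hα.2]⟩ ?_
      rw [Real.cos_neg, Real.sin_neg]
      linarith
    · simp [hb]
    · exact absurd hx' (h β ⟨hb, hβ.2⟩)

lemma crapper_g (α : ℝ) : α * (4 * Real.sinc α) = 4 * Real.sin α := by
  rcases eq_or_ne α 0 with rfl | h
  · simp
  · rw [Real.sinc_of_ne_zero h]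
    field_simp

/-- There is a critical value `A₀ ∈ (0,1)` such that for every
`A ∈ [0,1)` the Crapper profile restricted to `[−π, π)` is injective iff `A < A₀`. -/
theorem crapper_critical_parameter :
    ∃ A₀ ∈ Set.Ioo (0 : ℝ) 1, ∀ A ∈ Set.Ico (0 : ℝ) 1,
      Set.InjOn (crapperZ A) (Set.Ico (-Real.pi) Real.pi) ↔ A < A₀ := by
  have hpi := Real.pi_pos
  have hgc : Continuous (fun α : ℝ => 4 * Real.sinc α - 2 * Real.cos α) :=
    (continuous_const.mul Real.continuous_sinc).sub (continuous_const.mul Real.continuous_cos)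
  obtain ⟨a, ha, hmax⟩ := (isCompact_Icc (a := (0 : ℝ)) (b := Real.pi)).exists_isMaxOn
    ⟨0, by simp [hpi.le]⟩ hgc.continuousOn
  have hmax' : ∀ x ∈ Set.Icc 0 Real.pi, 4 * Real.sinc x - 2 * Real.cos x
    ≤ 4 * Real.sinc a - 2 * Real.cos a := fun x hx => hmax hx
  obtain ⟨M, hM⟩ : ∃ M, M = 4 * Real.sinc a - 2 * Real.cos a := ⟨_, rfl⟩
  rw [← hM] at hmax'
  have hM2 : 2 < M := by
    have h := hmax' (Real.pi / 2) ⟨by linarith, by linarith⟩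
    have h2 := crapper_g (Real.pi / 2)
    rw [Real.sin_pi_div_two] at h2
    rw [Real.cos_pi_div_two] at h
    nlinarith [Real.pi_lt_four]
  obtain ⟨s, hs0, hs⟩ : ∃ s : ℝ, 0 < s ∧ s ^ 2 = M ^ 2 - 4 :=
    ⟨√(M ^ 2 - 4), Real.sqrt_pos.2 (by nlinarith), Real.sq_sqrt (by nlinarith)⟩
  have hsM : s < M := by nlinarith
  have hsM2 : M - 2 < s := by nlinarith
  refine ⟨(M - s) / 2, ⟨by linarith, by linarith⟩, ?_⟩
  rintro A ⟨h0, h1⟩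
  rw [crapper_inj_iff h0 h1]
  have hfac : A ^ 2 - M * A + 1 = ((M - s) / 2 - A) * ((M + s) / 2 - A) := by
    linear_combination (1 / 4) * hs
  have hpos : 0 < (M + s) / 2 - A := by linarith
  constructor
  · intro h
    by_contra! hA
    have hA0 : 0 < A := by linarith
    have hle : A ^ 2 - M * A + 1 ≤ 0 := by
      rw [hfac]
      exact mul_nonpos_of_nonpos_of_nonneg (by linarith) hpos.le
    have hk : (A ^ 2 + 1) / A ≤ M := by
      rw [div_le_iff₀ hA0]; linarith
    have hk2 : 2 < (A ^ 2 + 1) / A := by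
      rw [lt_div_iff₀ hA0]; nlinarith [pow_pos (sub_pos.2 h1) 2]
    obtain ⟨α, hα, hg⟩ := intermediate_value_Icc ha.1 hgc.continuousOn
      (show (A ^ 2 + 1) / A ∈ Set.Icc _ _ from ⟨by
        simp only [Real.sinc_zero, Real.cos_zero]; linarith, by rw [← hM]; exact hk⟩)
    simp only at hg
    have hα0 : α ≠ 0 := by
      rintro rfl
      simp only [Real.sinc_zero, Real.cos_zero] at hg
      linarith
    have hαpi : α ≠ Real.pi := by
      rintro rfl
      rw [Real.sinc_of_ne_zero hpi.ne', Real.sin_pi, Real.cos_pi] at hg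
      simp only [zero_div] at hg
      linarith
    refine h α ⟨lt_of_le_of_ne hα.1 hα0.symm, lt_of_le_of_ne (hα.2.trans ha.2) hαpi⟩ ?_
    rw [eq_div_iff hA0.ne'] at hg
    linear_combination A * crapper_g α - α * hg
  · intro hA α hα he
    have hgt : 0 < A ^ 2 - M * A + 1 := by
      rw [hfac]
      exact mul_pos (by linarith) hpos
    have hle := hmax' α ⟨hα.1.le, hα.2.le⟩
    have h2 : α * (A ^ 2 + 1 - A * (4 * Real.sinc α - 2 * Real.cos α)) = 0 := by
      linear_combination he - A * crapper_g α
    have h3 : 0 < A ^ 2 + 1 - A * (4 * Real.sinc α - 2 * Real.cos α) := by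
      nlinarith [mul_le_mul_of_nonneg_left hle h0]
    exact (mul_pos hα.1 h3).ne' h2
end

section
/- (Hardy's inequality, continuity of the left Hardy operator.) Let 1 < p < ∞, 0 < R < ∞, and β, γ ∈ ℝ satisfy β + 1/p < 1 and γ ≥ β − 1. Then there exists a constant C > 0 such that for every measurable function f : (0,R) → [0,∞), ∫₀^R x^{γp} (∫₀^x f(t) dt)^p dx ≤ C^p ∫₀^R x^{βp} f(x)^p dx. In other words, the Hardy operator f ↦ (x ↦ ∫₀^x f(t)dt) is continuous from L_{p,β}((0,R)) to L_{p,γ}((0,R)). -/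
open MeasureTheory Set ENNReal

lemma hardy_aux_head {r x : ℝ} (hr : -1 < r) (hx : 0 < x) :
    ∫⁻ t in Ioo (0 : ℝ) x, ENNReal.ofReal (t ^ r) = ENNReal.ofReal (x ^ (r + 1) / (r + 1)) := by
  have hi := (intervalIntegral.intervalIntegrable_rpow' (a := 0) (b := x) hr)
  rw [intervalIntegrable_iff_integrableOn_Ioo_of_le hx.le] at hi
  rw [← ofReal_integral_eq_lintegral_ofReal hi]
  · rw [← integral_Ioc_eq_integral_Ioo, ← intervalIntegral.integral_of_le hx.le,
      integral_rpow (Or.inl hr), Real.zero_rpow (by linarith), sub_zero]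
  · filter_upwards [ae_restrict_mem measurableSet_Ioo] with t ht
    exact Real.rpow_nonneg ht.1.le _

lemma hardy_aux_tail {e t : ℝ} (he : e < -1) (ht : 0 < t) :
    ∫⁻ x in Ioi t, ENNReal.ofReal (x ^ e) = ENNReal.ofReal (-t ^ (e + 1) / (e + 1)) := by
  rw [← ofReal_integral_eq_lintegral_ofReal (integrableOn_Ioi_rpow_of_lt he ht)]
  · rw [integral_Ioi_rpow_of_lt he ht]
  · filter_upwards [ae_restrict_mem measurableSet_Ioi] with x hx
    exact Real.rpow_nonneg (ht.trans hx).le _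

lemma hardy_aux_holder {p q a x : ℝ} (hpq : p.HolderConjugate q) (ha : a * q < 1) (hx : 0 < x)
    {f : ℝ → ℝ≥0∞} (hf : Measurable f) :
    (∫⁻ t in Ioo (0 : ℝ) x, f t) ^ p ≤
      ENNReal.ofReal ((x ^ (1 - a * q) / (1 - a * q)) ^ (p / q)) *
        ∫⁻ t in Ioo (0 : ℝ) x, ENNReal.ofReal (t ^ (a * p)) * f t ^ p := by
  have hp := hpq.pos
  have hq := hpq.symm.pos
  have h1 : ∫⁻ t in Ioo (0 : ℝ) x, f t =
      ∫⁻ t in Ioo (0 : ℝ) x, ((fun t => ENNReal.ofReal (t ^ a) * f t) *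
        (fun t => ENNReal.ofReal (t ^ (-a)))) t := by
    refine setLIntegral_congr_fun measurableSet_Ioo fun t ht => ?_
    simp only [Pi.mul_apply]
    rw [mul_right_comm, ← ENNReal.ofReal_mul (Real.rpow_nonneg ht.1.le _),
      ← Real.rpow_add ht.1]
    simp
  have h2 := ENNReal.lintegral_mul_le_Lp_mul_Lq (volume.restrict (Ioo (0 : ℝ) x)) hpq
    (f := fun t => ENNReal.ofReal (t ^ a) * f t) (g := fun t => ENNReal.ofReal (t ^ (-a)))
    (by fun_prop) (by fun_prop)
  have h3 : ∫⁻ t in Ioo (0 : ℝ) x, (ENNReal.ofReal (t ^ a) * f t) ^ p =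
      ∫⁻ t in Ioo (0 : ℝ) x, ENNReal.ofReal (t ^ (a * p)) * f t ^ p := by
    refine setLIntegral_congr_fun measurableSet_Ioo fun t ht => ?_
    rw [ENNReal.mul_rpow_of_nonneg _ _ hp.le,
      ENNReal.ofReal_rpow_of_nonneg (Real.rpow_nonneg ht.1.le _) hp.le, ← Real.rpow_mul ht.1.le]
  have h4 : ∫⁻ t in Ioo (0 : ℝ) x, (ENNReal.ofReal (t ^ (-a))) ^ q =
      ENNReal.ofReal (x ^ (1 - a * q) / (1 - a * q)) := by
    rw [show 1 - a * q = -a * q + 1 by ring, ← hardy_aux_head (by linarith) hx]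
    refine setLIntegral_congr_fun measurableSet_Ioo fun t ht => ?_
    rw [ENNReal.ofReal_rpow_of_nonneg (Real.rpow_nonneg ht.1.le _) hq.le, ← Real.rpow_mul ht.1.le]
  rw [h3, h4, ← h1] at h2
  refine (ENNReal.rpow_le_rpow h2 hp.le).trans_eq ?_
  rw [ENNReal.mul_rpow_of_nonneg _ _ hp.le, ← ENNReal.rpow_mul, ← ENNReal.rpow_mul,
    one_div_mul_cancel hp.ne', ENNReal.rpow_one, mul_comm, one_div_mul_eq_div,
    ENNReal.ofReal_rpow_of_nonneg _ (div_nonneg hp.le hq.le)]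
  exact div_nonneg (Real.rpow_nonneg hx.le _) (by linarith)

lemma hardy_aux_fubini {e R : ℝ} (he : e < -1) {g : ℝ → ℝ≥0∞} (hg : Measurable g) :
    ∫⁻ x in Ioo (0 : ℝ) R, ENNReal.ofReal (x ^ e) * ∫⁻ t in Ioo (0 : ℝ) x, g t ≤
      ∫⁻ t in Ioo (0 : ℝ) R, ENNReal.ofReal (-t ^ (e + 1) / (e + 1)) * g t := by
  have hm : Measurable (fun z : ℝ × ℝ => ENNReal.ofReal (z.1 ^ e) *
      (if z.2 < z.1 then g z.2 else 0)) := by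
    refine Measurable.mul (by fun_prop) (Measurable.ite ?_ (by fun_prop) measurable_const)
    exact measurableSet_lt measurable_snd measurable_fst
  calc _ ≤ ∫⁻ x in Ioo (0 : ℝ) R, ∫⁻ t in Ioo (0 : ℝ) R,
        ENNReal.ofReal (x ^ e) * (if t < x then g t else 0) := by
        refine setLIntegral_mono' measurableSet_Ioo fun x hx => ?_
        rw [lintegral_const_mul' _ _ ENNReal.ofReal_ne_top]
        refine mul_le_mul_right ?_ _
        refine le_trans (le_of_eq ?_) (lintegral_mono_set (Ioo_subset_Ioo_right hx.2.le))
        refine setLIntegral_congr_fun measurableSet_Ioo fun t ht => ?_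
        simp [ht.2]
    _ = ∫⁻ t in Ioo (0 : ℝ) R, ∫⁻ x in Ioo (0 : ℝ) R,
        ENNReal.ofReal (x ^ e) * (if t < x then g t else 0) :=
        lintegral_lintegral_swap hm.aemeasurable
    _ ≤ _ := by
        refine setLIntegral_mono' measurableSet_Ioo fun t ht => ?_
        rw [← hardy_aux_tail he ht.1, ← lintegral_mul_const _ (by fun_prop)]
        rw [← lintegral_indicator measurableSet_Ioi]
        refine (setLIntegral_le_lintegral _ _).trans (lintegral_mono fun x => ?_)
        by_cases h : t < x <;> simp [h]

/-- Hardy's inequality, continuity of the left Hardy operator.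
If `1 < p < ∞`, `0 < R < ∞`, `β + 1/p < 1` and `γ ≥ β − 1`, then there is `C > 0`
such that for all nonnegative measurable `f` on `(0,R)`,
`∫₀^R x^{γp} (∫₀^x f)^p dx ≤ C^p ∫₀^R x^{βp} f(x)^p dx`. -/
theorem hardy_left_continuous (p R β γ : ℝ) (hp : 1 < p) (hR : 0 < R)
    (hβ : β + 1 / p < 1) (hγ : β - 1 ≤ γ) :
    ∃ C : ℝ, 0 < C ∧ ∀ f : ℝ → ℝ≥0∞, Measurable f →
      (∫⁻ x in Ioo (0 : ℝ) R,
          ENNReal.ofReal (x ^ (γ * p)) * (∫⁻ t in Ioo (0 : ℝ) x, f t) ^ p)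
        ≤ ENNReal.ofReal C ^ p *
          ∫⁻ x in Ioo (0 : ℝ) R, ENNReal.ofReal (x ^ (β * p)) * f x ^ p := by
  have hpq := Real.HolderConjugate.conjExponent hp
  set q := p.conjExponent with hq
  have hp0 : 0 < p := hpq.pos
  have hq0 : 0 < q := hpq.symm.pos
  have hsum : 1 / p + 1 / q = 1 := by simpa using hpq.inv_add_inv_eq_one
  have hpdq : p / q = p - 1 := by
    have : p * (1 / p + 1 / q) = p * 1 := by rw [hsum]
    rw [mul_add, mul_one_div_cancel hp0.ne', mul_one_div] at this
    linarith
  obtain ⟨a, ha1, ha2⟩ : ∃ a, β < a ∧ a < 1 / q := exists_between (by linarith)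
  have haq : a * q < 1 := (lt_div_iff₀ hq0).1 ha2
  set A : ℝ := R ^ ((γ - β + 1) * p) with hA
  set B : ℝ := (1 / (1 - a * q)) ^ (p / q) with hB
  have hA0 : 0 < A := Real.rpow_pos_of_pos hR _
  have hB0 : 0 < B := Real.rpow_pos_of_pos (one_div_pos.2 (by linarith)) _
  have hD0 : 0 < (a - β) * p := mul_pos (by linarith) hp0
  set K : ℝ := A * B / ((a - β) * p) with hK
  have hK0 : 0 < K := by positivity
  refine ⟨K ^ (1 / p), Real.rpow_pos_of_pos hK0 _, fun f hf => ?_⟩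
  rw [ENNReal.ofReal_rpow_of_nonneg (Real.rpow_nonneg hK0.le _) hp0.le, ← Real.rpow_mul hK0.le,
    one_div_mul_cancel hp0.ne', Real.rpow_one]
  set e : ℝ := (β - a) * p - 1 with he
  have he1 : e < -1 := by nlinarith
  calc _ ≤ ∫⁻ x in Ioo (0 : ℝ) R, ENNReal.ofReal (A * B) * (ENNReal.ofReal (x ^ e) *
          ∫⁻ t in Ioo (0 : ℝ) x, ENNReal.ofReal (t ^ (a * p)) * f t ^ p) := by
        refine setLIntegral_mono' measurableSet_Ioo fun x hx => ?_
        refine (mul_le_mul_right (hardy_aux_holder hpq haq hx.1 hf) _).trans ?_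
        rw [← mul_assoc, ← mul_assoc, ← ENNReal.ofReal_mul (Real.rpow_nonneg hx.1.le _),
          ← ENNReal.ofReal_mul (by positivity)]
        refine mul_le_mul_left (ENNReal.ofReal_le_ofReal ?_) _
        have h1 : x ^ (γ * p) ≤ A * x ^ ((β - 1) * p) := by
          rw [show γ * p = (γ - β + 1) * p + (β - 1) * p by ring, Real.rpow_add hx.1]
          exact mul_le_mul_of_nonneg_right (Real.rpow_le_rpow hx.1.le hx.2.le
            (mul_nonneg (by linarith) hp0.le)) (Real.rpow_nonneg hx.1.le _)
        have h2 : (x ^ (1 - a * q) / (1 - a * q)) ^ (p / q) = B * x ^ (p - 1 - a * p) := by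
          rw [div_eq_mul_one_div, Real.mul_rpow (Real.rpow_nonneg hx.1.le _)
            (one_div_nonneg.2 (by linarith)), ← Real.rpow_mul hx.1.le, mul_comm, ← hB]
          congr 2
          rw [← hpdq]; field_simp
        rw [h2]
        calc _ ≤ (A * x ^ ((β - 1) * p)) * (B * x ^ (p - 1 - a * p)) := by
              exact mul_le_mul_of_nonneg_right h1
                (mul_nonneg hB0.le (Real.rpow_nonneg hx.1.le _))
          _ = A * B * (x ^ ((β - 1) * p) * x ^ (p - 1 - a * p)) := by ring
          _ = _ := by
              rw [← Real.rpow_add hx.1, he]; congr 2; ring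
    _ ≤ ENNReal.ofReal (A * B) * ∫⁻ t in Ioo (0 : ℝ) R, ENNReal.ofReal (-t ^ (e + 1) / (e + 1)) *
          (ENNReal.ofReal (t ^ (a * p)) * f t ^ p) := by
        rw [lintegral_const_mul' _ _ ENNReal.ofReal_ne_top]
        exact mul_le_mul_right (hardy_aux_fubini he1
          (g := fun t => ENNReal.ofReal (t ^ (a * p)) * f t ^ p) (by fun_prop)) _
    _ = _ := by
        rw [← lintegral_const_mul' _ _ ENNReal.ofReal_ne_top,
          ← lintegral_const_mul' _ _ ENNReal.ofReal_ne_top]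
        refine setLIntegral_congr_fun measurableSet_Ioo fun t ht => ?_
        have h0 : -t ^ (e + 1) / (e + 1) = t ^ ((β - a) * p) / ((a - β) * p) := by
          rw [show e + 1 = (β - a) * p by rw [he]; ring,
            show (β - a) * p = -((a - β) * p) by ring, neg_div_neg_eq]
        have := Real.rpow_pos_of_pos ht.1 ((β - a) * p)
        rw [h0, ← mul_assoc, ← mul_assoc, ← mul_assoc, ← ENNReal.ofReal_mul (by positivity),
          ← ENNReal.ofReal_mul (by positivity), ← ENNReal.ofReal_mul (by positivity)]
        congr 2
        rw [show β * p = (β - a) * p + a * p by ring, Real.rpow_add ht.1, hK]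
        ring
end

section
/- (Hardy's inequality, compactness of the left Hardy operator.) Let 1 < p < ∞, 0 < R < ∞, and β, γ ∈ ℝ satisfy β + 1/p < 1 and γ > β − 1. Then there exists a continuous linear operator T from L^p of the measure x^{βp}dx on (0,R) to L^p of the measure x^{γp}dx on (0,R) such that for every f, (Tf)(x) = ∫₀^x f(t) dt for almost every x ∈ (0,R), and T is a compact operator. -/
open MeasureTheory Set ENNReal

/-- The weighted measure `x^{βp} dx` on `(0,R)`. -/
noncomputable def hardyWeight (R β p : ℝ) : Measure ℝ :=
  (volume.restrict (Ioo (0 : ℝ) R)).withDensity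
    (fun x => ENNReal.ofReal (x ^ (β * p)))


/-- An `L^r` function with values in the dual of `X` gives an operator `X → L^r`. -/
noncomputable def hardyOp {α X : Type*} [MeasurableSpace α] {ν : Measure α}
    [NormedAddCommGroup X] [NormedSpace ℝ X] {r : ℝ≥0∞} [Fact (1 ≤ r)]  :
    Lp (X →L[ℝ] ℝ) r ν →L[ℝ] X →L[ℝ] Lp ℝ r ν :=
  (ContinuousLinearMap.compLpL₂ r ν (ContinuousLinearMap.id ℝ (X →L[ℝ] ℝ)).flip).flip

theorem hardyOp_ae {α X : Type*} [MeasurableSpace α] {ν : Measure α}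
    [NormedAddCommGroup X] [NormedSpace ℝ X] {r : ℝ≥0∞} [Fact (1 ≤ r)]
    (l : Lp (X →L[ℝ] ℝ) r ν) (f : X) :
    ∀ᵐ x ∂ν, (hardyOp l f : α → ℝ) x = (l : α → (X →L[ℝ] ℝ)) x f := by
  exact ContinuousLinearMap.coeFn_compLp ((ContinuousLinearMap.id ℝ (X →L[ℝ] ℝ)).flip f) l

theorem hardyOp_compact {α X : Type*} [MeasurableSpace α] {ν : Measure α}
    [NormedAddCommGroup X] [NormedSpace ℝ X] {r : ℝ≥0∞} [Fact (1 ≤ r)] (hr : r ≠ ∞)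
    (l : Lp (X →L[ℝ] ℝ) r ν) : IsCompactOperator (hardyOp l) := by
  induction l using Lp.induction hr with
  | indicatorConst c hs hμs =>
    rename_i s
    have : hardyOp (Lp.simpleFunc.indicatorConst r hs hμs.ne c : Lp (X →L[ℝ] ℝ) r ν) =
        (ContinuousLinearMap.toSpanSingleton ℝ (indicatorConstLp r hs hμs.ne (1 : ℝ))).comp c := by
      ext1 f
      ext1
      have e : (Lp.simpleFunc.indicatorConst r hs hμs.ne c : Lp (X →L[ℝ] ℝ) r ν) =
        indicatorConstLp r hs hμs.ne c := Lp.simpleFunc.coe_indicatorConst hs hμs.ne c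
      rw [e]
      simp only [ContinuousLinearMap.comp_apply, ContinuousLinearMap.toSpanSingleton_apply]
      filter_upwards [hardyOp_ae (indicatorConstLp r hs hμs.ne c) f,
        indicatorConstLp_coeFn (p := r) (hs := hs) (hμs := hμs.ne) (c := c),
        indicatorConstLp_coeFn (p := r) (hs := hs) (hμs := hμs.ne) (c := (1 : ℝ)),
        Lp.coeFn_smul (c f) (indicatorConstLp r hs hμs.ne (1 : ℝ))] with x h1 h2 h3 h4
      rw [h1, h2, h4, Pi.smul_apply, h3]
      by_cases hx : x ∈ s <;> simp [hx]
    rw [this]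
    exact (isCompactOperator_of_locallyCompactSpace_rng
      (ContinuousLinearMap.toSpanSingleton ℝ (indicatorConstLp r hs hμs.ne (1 : ℝ)))).comp_clm c
  | add hf hg _ h1 h2 =>
    rw [map_add]
    exact h1.add h2
  | isClosed =>
    exact (isClosed_setOfPred_isCompactOperator (σ₁₂ := RingHom.id ℝ) (M₁ := X) (M₂ := Lp ℝ r ν)).preimage
      (hardyOp (ν := ν) (X := X) (r := r)).continuous

/-- kernel -/
noncomputable def hardyKer (β p : ℝ) : ℝ → ℝ := fun t => t ^ (-(β * p))

theorem hardyKer_lintegral {p q R β : ℝ} (hpq : p.HolderConjugate q) {s : Set ℝ} (hs : MeasurableSet s) :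
    ∫⁻ t, ‖s.indicator (hardyKer β p) t‖ₑ ^ q ∂(hardyWeight R β p) =
      ∫⁻ t in s, ENNReal.ofReal (t ^ (-(β * q))) ∂(volume.restrict (Ioo (0 : ℝ) R)) := by
  have hm : Measurable (hardyKer β p) := by unfold hardyKer; fun_prop
  rw [hardyWeight, lintegral_withDensity_eq_lintegral_mul _ (by fun_prop)
    ((hm.indicator hs).enorm.pow_const _), ← lintegral_indicator hs]
  refine setLIntegral_congr_fun measurableSet_Ioo fun t ht => ?_
  have ht0 : 0 < t := ht.1
  by_cases h : t ∈ s
  · have h1 : ‖hardyKer β p t‖ₑ = ENNReal.ofReal (t ^ (-(β * p))) := by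
      rw [hardyKer, Real.enorm_eq_ofReal (by positivity)]
    simp only [Pi.mul_apply, indicator_of_mem h]
    rw [h1, ENNReal.ofReal_rpow_of_nonneg (by positivity) hpq.symm.nonneg,
      ← ENNReal.ofReal_mul (by positivity), ← Real.rpow_mul ht0.le, ← Real.rpow_add ht0]
    congr 2
    have := hpq.mul_eq_add
    linear_combination (-β) * this
  · simp [h, hpq.symm.pos]

theorem hardy_finite {a R : ℝ} (ha : -1 < a) :
    ∫⁻ t, ENNReal.ofReal (t ^ a) ∂(volume.restrict (Ioo (0 : ℝ) R)) ≠ ∞ := by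
  rcases le_or_gt R 0 with h | h
  · simp [Ioo_eq_empty_of_le h]
  have : IntegrableOn (fun t : ℝ => t ^ a) (Ioo 0 R) :=
    (intervalIntegral.integrableOn_Ioo_rpow_iff h).2 ha
  have h2 := this.hasFiniteIntegral
  rw [hasFiniteIntegral_iff_ofReal] at h2
  · exact h2.ne
  · filter_upwards [ae_restrict_mem measurableSet_Ioo] with t ht
    have := ht.1
    positivity

theorem hardyKer_memLp {p q R β : ℝ} (hpq : p.HolderConjugate q) (hβ : -1 < -(β * q)) {s : Set ℝ}
    (hs : MeasurableSet s) :
    MemLp (s.indicator (hardyKer β p)) (ENNReal.ofReal q) (hardyWeight R β p) := by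
  have hm : Measurable (hardyKer β p) := by unfold hardyKer; fun_prop
  refine ⟨(hm.indicator hs).aestronglyMeasurable, ?_⟩
  rw [eLpNorm_lt_top_iff_lintegral_rpow_enorm_lt_top (by simpa using hpq.symm.pos) (by simp),
    ENNReal.toReal_ofReal hpq.symm.nonneg, hardyKer_lintegral hpq hs]
  exact (setLIntegral_le_lintegral _ _).trans_lt (hardy_finite hβ).lt_top

theorem hardyKer_eLpNorm {p q R β : ℝ} (hpq : p.HolderConjugate q) {s : Set ℝ}
    (hs : MeasurableSet s) :
    eLpNorm (s.indicator (hardyKer β p)) (ENNReal.ofReal q) (hardyWeight R β p) =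
      (∫⁻ t in s, ENNReal.ofReal (t ^ (-(β * q))) ∂(volume.restrict (Ioo (0 : ℝ) R))) ^ (1 / q) := by
  rw [eLpNorm_eq_lintegral_rpow_enorm_toReal (by simpa using hpq.symm.pos) (by simp),
    ENNReal.toReal_ofReal hpq.symm.nonneg, hardyKer_lintegral hpq hs]

/-- the kernel in L^q -/
noncomputable def hardyK {p q : ℝ} (R : ℝ) {β : ℝ} (hpq : p.HolderConjugate q) (hβ : -1 < -(β * q)) (x : ℝ) :
    Lp ℝ (ENNReal.ofReal q) (hardyWeight R β p) :=
  (hardyKer_memLp (R := R) hpq hβ (s := Iio x) measurableSet_Iio).toLp _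

theorem hardyK_continuous {p q R β : ℝ} (hpq : p.HolderConjugate q) (hβ : -1 < -(β * q))
    [Fact (1 ≤ ENNReal.ofReal q)] :
    Continuous (hardyK R hpq hβ) := by
  rw [continuous_iff_continuousAt]
  intro x
  rw [ContinuousAt, tendsto_iff_edist_tendsto_0]
  have key : ∀ y, edist (hardyK R hpq hβ y) (hardyK R hpq hβ x) =
      (∫⁻ t in (symmDiff (Iio y) (Iio x)), ENNReal.ofReal (t ^ (-(β * q)))
        ∂(volume.restrict (Ioo (0 : ℝ) R))) ^ (1 / q) := by
    intro y
    rw [hardyK, hardyK, Lp.edist_toLp_toLp, ← hardyKer_eLpNorm hpq (by measurability),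
      eLpNorm_indicator_sub_indicator]
  simp_rw [key]
  have hq : 0 < 1 / q := by have := hpq.symm.pos; positivity
  have : Filter.Tendsto (fun y => ∫⁻ t in (symmDiff (Iio y) (Iio x)), ENNReal.ofReal (t ^ (-(β * q)))
        ∂(volume.restrict (Ioo (0 : ℝ) R))) (nhds x) (nhds 0) := by
    apply tendsto_setLIntegral_zero (hardy_finite hβ)
    have hb : ∀ y, (volume.restrict (Ioo (0 : ℝ) R)) (symmDiff (Iio y) (Iio x)) ≤
        ENNReal.ofReal |y - x| := by
      intro y
      refine (Measure.restrict_apply_le _ _).trans ?_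
      have : symmDiff (Iio y) (Iio x) ⊆ uIcc x y := by
        intro t ht
        simp only [mem_symmDiff, mem_Iio] at ht
        rw [mem_uIcc]
        grind
      refine (measure_mono this).trans ?_
      rw [Real.volume_interval]
    refine tendsto_of_tendsto_of_tendsto_of_le_of_le tendsto_const_nhds ?_ (fun _ => zero_le) hb
    have : Continuous fun y : ℝ => ENNReal.ofReal |y - x| :=
      ENNReal.continuous_ofReal.comp (by fun_prop)
    simpa using this.tendsto x
  have h2 := ((ENNReal.continuous_rpow_const (y := 1 / q)).tendsto 0).comp this
  simpa [Function.comp_def, ENNReal.zero_rpow_of_pos hq, hpq.symm.pos] using h2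

theorem hardyK_norm {p q R β : ℝ} (hpq : p.HolderConjugate q) (hβ : -1 < -(β * q))
    {x : ℝ} (hx : x ∈ Ioo 0 R) :
    ‖hardyK R hpq hβ x‖ = (1 / (1 - β * q)) ^ (1 / q) * x ^ ((1 - β * q) / q) := by
  have hx0 := hx.1
  rw [hardyK, Lp.norm_toLp, hardyKer_eLpNorm hpq measurableSet_Iio,
    Measure.restrict_restrict measurableSet_Iio, Iio_inter_Ioo, min_eq_left hx.2.le,
    ← ofReal_integral_eq_lintegral_ofReal, ← integral_Ioc_eq_integral_Ioo,
    ← intervalIntegral.integral_of_le hx0.le, integral_rpow (Or.inl hβ),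
    ← ENNReal.toReal_rpow, ENNReal.toReal_ofReal]
  · have : (0:ℝ) < 1 - β * q := by linarith
    have e : -(β * q) + 1 = 1 - β * q := by ring
    rw [e, Real.zero_rpow this.ne', sub_zero, div_eq_mul_one_div, mul_comm,
      Real.mul_rpow (by positivity) (by positivity), ← Real.rpow_mul hx0.le]
    congr 2; ring
  · have : (0:ℝ) < 1 - β * q := by linarith
    have e : -(β * q) + 1 = 1 - β * q := by ring
    rw [e, Real.zero_rpow this.ne']
    simp only [sub_zero]; positivity
  · exact (intervalIntegral.integrableOn_Ioo_rpow_iff hx0).2 hβ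
  · filter_upwards [ae_restrict_mem measurableSet_Ioo] with t ht
    have := ht.1
    positivity

theorem hardy_memLp_rpow {p R γ a : ℝ} (hp : 0 < p) (h : -1 < γ * p + a * p) :
    MemLp (fun x : ℝ => x ^ a) (ENNReal.ofReal p) (hardyWeight R γ p) := by
  have hm : Measurable (fun x : ℝ => x ^ a) := by fun_prop
  refine ⟨hm.aestronglyMeasurable, ?_⟩
  rw [eLpNorm_lt_top_iff_lintegral_rpow_enorm_lt_top (by simpa using hp) (by simp),
    ENNReal.toReal_ofReal hp.le, hardyWeight, lintegral_withDensity_eq_lintegral_mul _ (by fun_prop)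
    (hm.enorm.pow_const _)]
  refine lt_of_eq_of_lt ?_ (hardy_finite (R := R) h).lt_top
  refine setLIntegral_congr_fun measurableSet_Ioo fun t ht => ?_
  have ht0 : 0 < t := ht.1
  simp only [Pi.mul_apply]
  rw [Real.enorm_eq_ofReal (by positivity), ENNReal.ofReal_rpow_of_nonneg (by positivity) hp.le,
      ← ENNReal.ofReal_mul (by positivity), ← Real.rpow_mul ht0.le, ← Real.rpow_add ht0]

theorem hardy_ae {R β p : ℝ} {P : ℝ → Prop} :
    (∀ᵐ x ∂(hardyWeight R β p), P x) ↔ ∀ᵐ x ∂(volume.restrict (Ioo (0 : ℝ) R)), P x := by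
  rw [hardyWeight, ae_withDensity_iff (by fun_prop)]
  have : ∀ᵐ x ∂(volume.restrict (Ioo (0 : ℝ) R)), ENNReal.ofReal (x ^ (β * p)) ≠ 0 := by
    filter_upwards [ae_restrict_mem measurableSet_Ioo] with t ht
    simpa using Real.rpow_pos_of_pos ht.1 _
  constructor
  · intro h
    filter_upwards [h, this] with x h1 h2 using h1 h2
  · intro h
    filter_upwards [h] with x h1 _ using h1

theorem hardyK_pairing {p q R β : ℝ} (hpq : p.HolderConjugate q) (hβ : -1 < -(β * q))
    {x : ℝ} (hx : x ∈ Ioo 0 R) (f : ℝ → ℝ) :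
    ∫ t, (hardyK R hpq hβ x : ℝ → ℝ) t * f t ∂(hardyWeight R β p) = ∫ t in Ioo (0 : ℝ) x, f t := by
  have h1 : ∫ t, (hardyK R hpq hβ x : ℝ → ℝ) t * f t ∂(hardyWeight R β p) =
      ∫ t, (Iio x).indicator (hardyKer β p) t * f t ∂(hardyWeight R β p) := by
    refine integral_congr_ae ?_
    filter_upwards [MemLp.coeFn_toLp (hardyKer_memLp (R := R) hpq hβ (s := Iio x) measurableSet_Iio)] with t ht
    rw [hardyK, ht]
  rw [h1, hardyWeight, integral_withDensity_eq_integral_toReal_smul (by fun_prop) (by simp)]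
  have h2 : Ioo 0 x = Iio x ∩ Ioo 0 R := by rw [Iio_inter_Ioo, min_eq_left hx.2.le]
  rw [h2, ← Measure.restrict_restrict measurableSet_Iio, ← integral_indicator measurableSet_Iio]
  refine setIntegral_congr_fun measurableSet_Ioo fun t ht => ?_
  have ht0 : 0 < t := ht.1
  by_cases h : t ∈ Iio x
  · simp only [indicator_of_mem h, hardyKer, smul_eq_mul]
    rw [ENNReal.toReal_ofReal (by positivity), ← mul_assoc, ← Real.rpow_add ht0]
    simp
  · simp [h]
/-- Hardy's inequality, compactness of the left Hardy operator.
If `1 < p < ∞`, `0 < R < ∞`, `β + 1/p < 1` and `γ > β − 1`, then the Hardy operator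
`f ↦ (x ↦ ∫₀^x f)` extends to a compact continuous linear operator from
`L^p(x^{βp}dx)` to `L^p(x^{γp}dx)` on `(0,R)`. -/
theorem hardy_left_compact (p R β γ : ℝ) (hp : 1 < p) (hR : 0 < R)
    (hβ : β + 1 / p < 1) (hγ : β - 1 < γ)
    [Fact (1 ≤ ENNReal.ofReal p)] :
    ∃ T : Lp ℝ (ENNReal.ofReal p) (hardyWeight R β p) →L[ℝ]
        Lp ℝ (ENNReal.ofReal p) (hardyWeight R γ p),
      IsCompactOperator T ∧
      ∀ f : Lp ℝ (ENNReal.ofReal p) (hardyWeight R β p),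
        ∀ᵐ x ∂(volume.restrict (Ioo (0 : ℝ) R)),
          (T f : ℝ → ℝ) x = ∫ t in Ioo (0 : ℝ) x, (f : ℝ → ℝ) t := by
  obtain ⟨q, hpq⟩ : ∃ q, p.HolderConjugate q := ⟨_, Real.HolderConjugate.conjExponent hp⟩
  have hq0 := hpq.symm.pos
  have hp0 := hpq.pos
  have hinv : 1 / p + 1 / q = 1 := by simpa using hpq.inv_add_inv_eq_one
  have hβq : β * q < 1 := by
    have : β < 1 / q := by linarith
    rwa [lt_div_iff₀ hq0] at this
  have hβ' : -1 < -(β * q) := by linarith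
  have : Fact (1 ≤ ENNReal.ofReal q) := ⟨by simpa using hpq.symm.lt.le⟩
  have : ENNReal.HolderConjugate (ENNReal.ofReal q) (ENNReal.ofReal p) := hpq.symm.ennrealOfReal
  let B := (ContinuousLinearMap.mul ℝ ℝ).lpPairing (hardyWeight R β p)
    (ENNReal.ofReal q) (ENNReal.ofReal p)
  have hl : MemLp (fun x => B (hardyK R hpq hβ' x)) (ENNReal.ofReal p) (hardyWeight R γ p) := by
    have hd : MemLp (fun x : ℝ => x ^ ((1 - β * q) / q)) (ENNReal.ofReal p) (hardyWeight R γ p) := by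
      apply hardy_memLp_rpow hp0
      have e : (1 - β * q) / q = 1 - 1 / p - β := by
        rw [sub_div, mul_div_cancel_right₀ _ hq0.ne']; linarith
      have e2 : γ * p + (1 - β * q) / q * p = (γ + 1 - β) * p - 1 := by
        rw [e]; field_simp; ring
      rw [e2]
      have : 0 < (γ + 1 - β) * p := mul_pos (by linarith) hp0
      linarith
    refine MemLp.of_le (hd.const_mul (‖B‖ * (1 / (1 - β * q)) ^ (1 / q)))
      (B.continuous.comp (hardyK_continuous hpq hβ')).aestronglyMeasurable ?_
    rw [hardy_ae]
    filter_upwards [ae_restrict_mem measurableSet_Ioo] with x hx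
    refine (B.le_opNorm _).trans ?_
    rw [hardyK_norm hpq hβ' hx, ← mul_assoc]
    exact le_abs_self _
  refine ⟨hardyOp (hl.toLp _), hardyOp_compact (by simp) _, fun f => ?_⟩
  have h1 := hardy_ae.1 (hardyOp_ae (hl.toLp _) f)
  have h2 := hardy_ae.1 hl.coeFn_toLp
  filter_upwards [h1, h2, ae_restrict_mem measurableSet_Ioo] with x h1 h2 hx
  rw [h1, h2, ← hardyK_pairing hpq hβ' hx]
  exact ContinuousLinearMap.lpPairing_eq_integral (ContinuousLinearMap.mul ℝ ℝ) (hardyK R hpq hβ' x) f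
end

section
/- (Hardy's inequality, compactness of the right Hardy operator.) Let 1 < p < ∞, 0 < R < ∞, and β, γ ∈ ℝ satisfy β + 1/p > 0 and γ < β + 1. Then there exists a continuous linear operator T from L^p of the measure x^{γp}dx on (0,R) to L^p of the measure x^{βp}dx on (0,R) such that for every f, (Tf)(x) = ∫_x^R f(t) dt for almost every x ∈ (0,R), and T is a compact operator. -/
open MeasureTheory Set ENNReal

/-- An operator with kernel in the Bochner space `L^p(μ; E*)` is compact. -/
theorem compact_of_kernel {E α : Type*} [NormedAddCommGroup E] [NormedSpace ℝ E]
    [MeasurableSpace α] (μ : Measure α) (p : ℝ≥0∞) [Fact (1 ≤ p)] (hp : p ≠ ∞)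
    (k : Lp (E →L[ℝ] ℝ) p μ) :
    ∃ T : E →L[ℝ] Lp ℝ p μ, IsCompactOperator T ∧ ∀ f, T f =ᵐ[μ] fun x => k x f := by
  let B : E →L[ℝ] (E →L[ℝ] ℝ) →L[ℝ] ℝ := (ContinuousLinearMap.id ℝ (E →L[ℝ] ℝ)).flip
  let Φ := (B.compLpL₂ p μ).flip
  have hΦ : ∀ k f, Φ k f =ᵐ[μ] fun x => k x f := fun k f => (B f).coeFn_compLp k
  refine ⟨Φ k, ?_, hΦ k⟩
  refine Lp.induction hp (motive := fun k => IsCompactOperator (Φ k)) ?_ ?_ ?_ k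
  · intro c s hs hμs
    have : ((Φ (Lp.simpleFunc.indicatorConst p hs hμs.ne c : Lp (E →L[ℝ] ℝ) p μ)) : E → Lp ℝ p μ)
        = ((ContinuousLinearMap.toSpanSingleton ℝ (indicatorConstLp p hs hμs.ne (1:ℝ))) : ℝ → Lp ℝ p μ) ∘ c := by
      funext f
      apply Lp.ext
      refine (hΦ _ f).trans ?_
      rw [Lp.simpleFunc.coe_indicatorConst]
      simp only [Function.comp, ContinuousLinearMap.toSpanSingleton_apply]
      filter_upwards [indicatorConstLp_coeFn (p := p) (hs := hs) (hμs := hμs.ne) (c := c),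
        indicatorConstLp_coeFn (p := p) (hs := hs) (hμs := hμs.ne) (c := (1:ℝ)),
        Lp.coeFn_smul (c f) (indicatorConstLp p hs hμs.ne (1:ℝ))] with x h1 h2 h3
      rw [h1, h3, Pi.smul_apply, h2]
      by_cases hx : x ∈ s <;> simp [hx]
    show IsCompactOperator _
    rw [this]
    exact (isCompactOperator_of_locallyCompactSpace_dom c).clm_comp
      (ContinuousLinearMap.toSpanSingleton ℝ (indicatorConstLp p hs hμs.ne (1:ℝ)))
  · intro f g hf hg _ h1 h2
    rw [map_add]
    exact h1.add h2
  · exact isClosed_setOfPred_isCompactOperator.preimage Φ.continuous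

theorem hardy_holder {p q R γ a b : ℝ} (hpq : p.HolderConjugate q) (ha : 0 < a) (hb : b ≤ R)
    (f : ℝ → ℝ) (hf : AEStronglyMeasurable f (volume.restrict (Ioo a b))) :
    ∫⁻ t in Ioo a b, ‖f t‖ₑ ≤ eLpNorm f (ENNReal.ofReal p) (hardyWeight R γ p) *
      (∫⁻ t in Ioo a b, ENNReal.ofReal (t ^ (-γ * q))) ^ (1 / q) := by
  have hp0 : 0 < p := hpq.pos
  have hq0 : 0 < q := hpq.symm.pos
  have h := ENNReal.lintegral_mul_le_Lp_mul_Lq (volume.restrict (Ioo a b)) hpq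
    (f := fun t => ‖f t‖ₑ * ENNReal.ofReal (t ^ γ)) (g := fun t => ENNReal.ofReal (t ^ (-γ)))
    (hf.enorm.mul (by fun_prop)) (by fun_prop)
  have e1 : ∫⁻ t in Ioo a b, ((fun t => ‖f t‖ₑ * ENNReal.ofReal (t ^ γ)) *
      (fun t => ENNReal.ofReal (t ^ (-γ)))) t = ∫⁻ t in Ioo a b, ‖f t‖ₑ := by
    refine setLIntegral_congr_fun measurableSet_Ioo fun t ht => ?_
    have ht0 : 0 < t := ha.trans ht.1
    simp only [Pi.mul_apply]
    rw [mul_assoc, ← ENNReal.ofReal_mul (by positivity), ← Real.rpow_add ht0]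
    simp
  have e2 : ∫⁻ t in Ioo a b, ENNReal.ofReal (t ^ (-γ)) ^ q
      = ∫⁻ t in Ioo a b, ENNReal.ofReal (t ^ (-γ * q)) := by
    refine setLIntegral_congr_fun measurableSet_Ioo fun t ht => ?_
    have ht0 : 0 < t := ha.trans ht.1
    rw [ENNReal.ofReal_rpow_of_nonneg (by positivity) hq0.le, ← Real.rpow_mul ht0.le]
  have e3 : (∫⁻ t in Ioo a b, (‖f t‖ₑ * ENNReal.ofReal (t ^ γ)) ^ p) ^ (1 / p)
      ≤ eLpNorm f (ENNReal.ofReal p) (hardyWeight R γ p) := by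
    rw [eLpNorm_eq_lintegral_rpow_enorm_toReal (by simpa using hp0) (by simp),
      ENNReal.toReal_ofReal hp0.le, hardyWeight,
      lintegral_withDensity_eq_lintegral_mul_non_measurable _ (by fun_prop) (by simp)]
    refine ENNReal.rpow_le_rpow ?_ (by positivity)
    refine le_trans (le_of_eq ?_) (lintegral_mono_set (Ioo_subset_Ioo ha.le hb))
    refine setLIntegral_congr_fun measurableSet_Ioo fun t ht => ?_
    have ht0 : 0 < t := ha.trans ht.1
    simp only [Pi.mul_apply]
    rw [ENNReal.mul_rpow_of_nonneg _ _ hp0.le, ENNReal.ofReal_rpow_of_nonneg (by positivity) hp0.le,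
      ← Real.rpow_mul ht0.le, mul_comm]
  rw [e1, e2] at h
  exact h.trans (by gcongr)

theorem hardy_ac (R γ p : ℝ) :
    volume.restrict (Ioo (0 : ℝ) R) ≪ hardyWeight R γ p := by
  refine withDensity_absolutelyContinuous' (by fun_prop) ?_
  filter_upwards [ae_restrict_mem measurableSet_Ioo] with x hx
  have := Real.rpow_pos_of_pos hx.1 (γ * p)
  simpa using this

theorem hardy_bound {p q R γ a b W : ℝ} (hpq : p.HolderConjugate q) [Fact (1 ≤ ENNReal.ofReal p)]
    (ha : 0 < a) (hb : b ≤ R)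
    (f : Lp ℝ (ENNReal.ofReal p) (hardyWeight R γ p)) (hW0 : 0 ≤ W)
    (hW : ∫⁻ t in Ioo a b, ENNReal.ofReal (t ^ (-γ * q)) ≤ ENNReal.ofReal W) :
    IntegrableOn (f : ℝ → ℝ) (Ioo a b) ∧
      ‖∫ t in Ioo a b, (f : ℝ → ℝ) t‖ ≤ W ^ (1 / q) * ‖f‖ := by
  have hq0 : 0 < q := hpq.symm.pos
  have hm : AEStronglyMeasurable (f : ℝ → ℝ) (volume.restrict (Ioo a b)) :=
    ((Lp.aestronglyMeasurable f).mono_ac (hardy_ac R γ p)).mono_measure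
      (Measure.restrict_mono (Ioo_subset_Ioo ha.le hb) le_rfl)
  have h := hardy_holder (γ := γ) hpq ha hb f hm
  have h2 : ∫⁻ t in Ioo a b, ‖(f : ℝ → ℝ) t‖ₑ ≤ ENNReal.ofReal (W ^ (1 / q) * ‖f‖) := by
    rw [mul_comm, ENNReal.ofReal_mul (norm_nonneg _), Lp.norm_def,
      ENNReal.ofReal_toReal (Lp.eLpNorm_ne_top f),
      ← ENNReal.ofReal_rpow_of_nonneg hW0 (by positivity)]
    exact h.trans (by gcongr)
  refine ⟨⟨hm, h2.trans_lt ENNReal.ofReal_lt_top⟩, ?_⟩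
  have h3 := (enorm_integral_le_lintegral_enorm _).trans h2
  rw [← ofReal_norm] at h3
  exact (ENNReal.ofReal_le_ofReal_iff (by positivity)).1 h3

theorem hardy_weight_bounds {R r s : ℝ} (hR : 0 < R) (hs : 1 < s) (hrs : -s ≤ r) :
    ∃ C, 0 ≤ C ∧ ∀ a b : ℝ, 0 < a → b ≤ R →
      ∫⁻ t in Ioo a b, ENNReal.ofReal (t ^ r) ≤ ENNReal.ofReal (C * a ^ (1 - s)) ∧
      ∫⁻ t in Ioo a b, ENNReal.ofReal (t ^ r) ≤ ENNReal.ofReal (C * a ^ (-s) * (b - a)) := by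
  have hs1 : 0 < s - 1 := by linarith
  refine ⟨R ^ (r + s) * (1 + 1 / (s - 1)), by positivity, fun a b ha hb => ?_⟩
  have key : ∀ t ∈ Ioo a b, t ^ r ≤ R ^ (r + s) * t ^ (-s) := by
    intro t ht
    have ht0 : 0 < t := ha.trans ht.1
    have : t ^ r = t ^ (r + s) * t ^ (-s) := by
      rw [← Real.rpow_add ht0]; congr 1; ring
    rw [this]
    gcongr
    · linarith
    · linarith [ht.2]
  constructor
  · calc ∫⁻ t in Ioo a b, ENNReal.ofReal (t ^ r)
        ≤ ∫⁻ t in Ioo a b, ENNReal.ofReal (R ^ (r + s) * t ^ (-s)) :=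
          setLIntegral_mono (by fun_prop) fun t ht => ENNReal.ofReal_le_ofReal (key t ht)
      _ ≤ ∫⁻ t in Ioi a, ENNReal.ofReal (R ^ (r + s) * t ^ (-s)) :=
          lintegral_mono_set Ioo_subset_Ioi_self
      _ = ENNReal.ofReal (∫ t in Ioi a, R ^ (r + s) * t ^ (-s)) := by
          rw [ofReal_integral_eq_lintegral_ofReal]
          · exact (integrableOn_Ioi_rpow_of_lt (by linarith) ha).const_mul _
          · filter_upwards [ae_restrict_mem measurableSet_Ioi] with t ht
            have ht0 : 0 < t := ha.trans ht
            positivity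
      _ ≤ _ := by
          apply ENNReal.ofReal_le_ofReal
          rw [integral_const_mul, integral_Ioi_rpow_of_lt (by linarith) ha, mul_assoc]
          gcongr
          have : -a ^ (-s + 1) / (-s + 1) = 1 / (s - 1) * a ^ (1 - s) := by
            rw [show -s + 1 = -(s - 1) by ring, show 1 - s = -(s - 1) by ring, neg_div_neg_eq]
            ring
          rw [this]
          gcongr
          linarith
  · rcases le_or_gt b a with hab | hab
    · simp [Ioo_eq_empty (not_lt.2 hab)]
    calc ∫⁻ t in Ioo a b, ENNReal.ofReal (t ^ r)
        ≤ ∫⁻ t in Ioo a b, ENNReal.ofReal (R ^ (r + s) * (1 + 1 / (s - 1)) * a ^ (-s)) := by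
          refine setLIntegral_mono (by fun_prop) fun t ht => ENNReal.ofReal_le_ofReal ?_
          refine (key t ht).trans ?_
          rw [mul_assoc]
          gcongr
          have h1 : t ^ (-s) ≤ a ^ (-s) :=
            Real.rpow_le_rpow_of_nonpos ha ht.1.le (by linarith)
          have h2 : 0 ≤ 1 / (s - 1) * a ^ (-s) := by positivity
          linarith
      _ = _ := by
          rw [setLIntegral_const, Real.volume_Ioo, ← ENNReal.ofReal_mul (by positivity)]

/-- Hardy's inequality, compactness of the right Hardy operator.
If `1 < p < ∞`, `0 < R < ∞`, `β + 1/p > 0` and `γ < β + 1`, then the operator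
`f ↦ (x ↦ ∫ₓ^R f)` extends to a compact continuous linear operator from
`L^p(x^{γp}dx)` to `L^p(x^{βp}dx)` on `(0,R)`. -/
theorem hardy_right_compact (p R β γ : ℝ) (hp : 1 < p) (hR : 0 < R)
    (hβ : 0 < β + 1 / p) (hγ : γ < β + 1)
    [Fact (1 ≤ ENNReal.ofReal p)] :
    ∃ T : Lp ℝ (ENNReal.ofReal p) (hardyWeight R γ p) →L[ℝ]
        Lp ℝ (ENNReal.ofReal p) (hardyWeight R β p),
      IsCompactOperator T ∧
      ∀ f : Lp ℝ (ENNReal.ofReal p) (hardyWeight R γ p),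
        ∀ᵐ x ∂(volume.restrict (Ioo (0 : ℝ) R)),
          (T f : ℝ → ℝ) x = ∫ t in Ioo x R, (f : ℝ → ℝ) t := by
  obtain ⟨q, hpq⟩ : ∃ q, p.HolderConjugate q := ⟨_, Real.HolderConjugate.conjExponent hp⟩
  have hp0 : 0 < p := hpq.pos
  have hq0 : 0 < q := hpq.symm.pos
  have hinv : 1 / p + 1 / q = 1 := by simpa using hpq.inv_add_inv_eq_one
  obtain ⟨δ, hδ1, hδ2⟩ : ∃ δ, max γ (1 / q) < δ ∧ δ < β + 1 :=
    exists_between (max_lt hγ (by linarith))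
  have hδγ : γ < δ := (le_max_left _ _).trans_lt hδ1
  have hδq : 1 / q < δ := (le_max_right _ _).trans_lt hδ1
  have hs : 1 < δ * q := by rwa [div_lt_iff₀ hq0] at hδq
  set s := δ * q with hs_def
  obtain ⟨C, hC, hCb⟩ := hardy_weight_bounds (r := -γ * q) hR hs (by rw [hs_def]; nlinarith)
  have hint : ∀ (a b : ℝ), 0 < a → b ≤ R →
      ∀ f : Lp ℝ (ENNReal.ofReal p) (hardyWeight R γ p),
      IntegrableOn (f : ℝ → ℝ) (Ioo a b) ∧
        ‖∫ t in Ioo a b, (f : ℝ → ℝ) t‖ ≤ (C * a ^ (1 - s)) ^ (1 / q) * ‖f‖ :=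
    fun a b ha hb f => hardy_bound hpq ha hb f (by positivity) (hCb a b ha hb).1
  -- the kernel
  have hex : ∀ x : ℝ, ∃ k : Lp ℝ (ENNReal.ofReal p) (hardyWeight R γ p) →L[ℝ] ℝ, 0 < x →
      (‖k‖ ≤ (C * x ^ (1 - s)) ^ (1 / q) ∧
        ∀ f : Lp ℝ (ENNReal.ofReal p) (hardyWeight R γ p), k f = ∫ t in Ioo x R, (f : ℝ → ℝ) t) := by
    intro x
    by_cases hx : 0 < x
    swap
    · exact ⟨0, fun h => absurd h hx⟩
    have hac : volume.restrict (Ioo x R) ≪ hardyWeight R γ p :=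
      (Measure.restrict_mono (Ioo_subset_Ioo hx.le le_rfl)
        le_rfl).absolutelyContinuous.trans (hardy_ac R γ p)
    let L : Lp ℝ (ENNReal.ofReal p) (hardyWeight R γ p) →ₗ[ℝ] ℝ :=
      { toFun := fun f => ∫ t in Ioo x R, (f : ℝ → ℝ) t
        map_add' := by
          intro f g
          rw [← integral_add (hint x R hx le_rfl f).1 (hint x R hx le_rfl g).1]
          exact integral_congr_ae (hac.ae_le (Lp.coeFn_add f g))
        map_smul' := by
          intro c f
          rw [RingHom.id_apply, ← integral_smul]
          exact integral_congr_ae (hac.ae_le (Lp.coeFn_smul c f)) }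
    refine ⟨L.mkContinuous _ fun f => (hint x R hx le_rfl f).2, fun _ => ⟨?_, fun f => rfl⟩⟩
    exact LinearMap.mkContinuous_norm_le _ (by positivity) _
  choose k hk using hex
  have hdiff : ∀ x y : ℝ, 0 < x → x ≤ y → y ≤ R →
      ‖k x - k y‖ ≤ (C * x ^ (-s) * (y - x)) ^ (1 / q) := by
    intro x y hx hxy hy
    have hyx : 0 ≤ y - x := by linarith
    have hy0 : 0 < y := by linarith
    refine ContinuousLinearMap.opNorm_le_bound _ (by positivity) fun f => ?_
    have e : (k x - k y) f = ∫ t in Ioo x y, (f : ℝ → ℝ) t := by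
      have i1 := (hint x y hx hy f).1
      have i2 := (hint y R hy0 le_rfl f).1
      rw [← intervalIntegrable_iff_integrableOn_Ioo_of_le hxy] at i1
      rw [← intervalIntegrable_iff_integrableOn_Ioo_of_le hy] at i2
      rw [sub_apply, (hk x hx).2, (hk y hy0).2]
      simp only [← integral_Ioc_eq_integral_Ioo]
      rw [← intervalIntegral.integral_of_le hxy, ← intervalIntegral.integral_of_le hy,
        ← intervalIntegral.integral_of_le (hxy.trans hy),
        ← intervalIntegral.integral_add_adjacent_intervals i1 i2]
      ring
    rw [e]
    exact (hardy_bound hpq hx hy f (by positivity) (hCb x y hx hy).2).2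
  have hcont : ContinuousOn k (Ioo 0 R) := by
    intro x₀ hx₀
    apply ContinuousAt.continuousWithinAt
    rw [ContinuousAt, tendsto_iff_norm_sub_tendsto_zero]
    have hx0 : 0 < x₀ := hx₀.1
    have hlim : Filter.Tendsto (fun x => (C * (x₀ / 2) ^ (-s) * |x - x₀|) ^ (1 / q))
        (nhds x₀) (nhds 0) := by
      have hc : Continuous (fun x => (C * (x₀ / 2) ^ (-s) * |x - x₀|) ^ (1 / q)) := by
        refine Continuous.rpow_const (by fun_prop) fun x => Or.inr (by positivity)
      have := hc.tendsto x₀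
      simpa [hq0.ne'] using this
    refine squeeze_zero' (Filter.Eventually.of_forall fun x => norm_nonneg _) ?_ hlim
    filter_upwards [Ioo_mem_nhds (show x₀ / 2 < x₀ by linarith) hx₀.2] with x hx
    have hxpos : 0 < x := by linarith [hx.1]
    have hmono : ∀ z, x₀ / 2 ≤ z → z ^ (-s) ≤ (x₀ / 2) ^ (-s) := fun z hz =>
      Real.rpow_le_rpow_of_nonpos (by positivity) hz (by linarith)
    rcases le_total x x₀ with h | h
    · have h1 : 0 ≤ x₀ - x := by linarith
      rw [abs_sub_comm, abs_of_nonneg h1]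
      refine (hdiff x x₀ hxpos h hx₀.2.le).trans ?_
      have := hmono x hx.1.le
      gcongr
    · have h1 : 0 ≤ x - x₀ := by linarith
      rw [norm_sub_rev, abs_of_nonneg h1]
      refine (hdiff x₀ x hx0 h hx.2.le).trans ?_
      have := hmono x₀ (by linarith)
      gcongr
  have hmeas : AEStronglyMeasurable k (hardyWeight R β p) :=
    (hcont.aestronglyMeasurable measurableSet_Ioo).mono_ac (withDensity_absolutelyContinuous _ _)
  have hmem : MemLp k (ENNReal.ofReal p) (hardyWeight R β p) := by
    refine ⟨hmeas, ?_⟩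
    rw [eLpNorm_eq_lintegral_rpow_enorm_toReal (by simpa using hp0) (by simp),
      ENNReal.toReal_ofReal hp0.le, hardyWeight,
      lintegral_withDensity_eq_lintegral_mul_non_measurable _ (by fun_prop) (by simp)]
    refine ENNReal.rpow_lt_top_of_nonneg (by positivity) (ne_of_lt ?_)
    have hexp : -1 < β * p + (1 - s) * (1 / q * p) := by
      have h1 : (1 - s) * (1 / q * p) = (1 / q - δ) * p := by
        rw [hs_def]; field_simp
      have h2 : 1 / q = 1 - 1 / p := by linarith
      rw [h1, h2]
      have h3 : β * p + (1 - 1 / p - δ) * p = (β + 1 - δ) * p - 1 := by field_simp; ring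
      rw [h3]
      have : 0 < (β + 1 - δ) * p := mul_pos (by linarith) hp0
      linarith
    have hI := ((intervalIntegral.integrableOn_Ioo_rpow_iff hR).2 hexp).const_mul
      (C ^ (1 / q * p))
    refine lt_of_le_of_lt ?_ hI.lintegral_lt_top
    refine setLIntegral_mono' measurableSet_Ioo fun x hx => ?_
    have hx0 : 0 < x := hx.1
    rw [Pi.mul_apply, ← ofReal_norm, ENNReal.ofReal_rpow_of_nonneg (norm_nonneg _) hp0.le,
      ← ENNReal.ofReal_mul (by positivity)]
    apply ENNReal.ofReal_le_ofReal
    calc x ^ (β * p) * ‖k x‖ ^ p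
        ≤ x ^ (β * p) * ((C * x ^ (1 - s)) ^ (1 / q)) ^ p := by
          have := (hk x hx0).1
          gcongr
      _ = C ^ (1 / q * p) * x ^ (β * p + (1 - s) * (1 / q * p)) := by
          rw [← Real.rpow_mul (by positivity), Real.mul_rpow hC (by positivity),
            ← Real.rpow_mul hx0.le, Real.rpow_add hx0]
          ring
  obtain ⟨T, hT, hTf⟩ := compact_of_kernel (hardyWeight R β p) (ENNReal.ofReal p) (by simp)
    (hmem.toLp k)
  refine ⟨T, hT, fun f => ?_⟩
  filter_upwards [(hardy_ac R β p).ae_le (hTf f), (hardy_ac R β p).ae_le hmem.coeFn_toLp,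
    ae_restrict_mem measurableSet_Ioo] with x h1 h2 h3
  rw [h1, h2, (hk x h3.1).2]
end

section
/- Let 0 < d < 1. Define a₁(ξ) = tanh(πξ/2) for ξ ∈ ℝ, and a₂(ξ) = coth(πξ/2) − 2/(πξ) for ξ ≠ 0, extended by a₂(0) = 0. Then there exists a constant c > 0 such that for all n ∈ ℕ, all m ∈ {0,1,2,3,4} and all ξ ∈ ℝ (with ξ ≠ 0 for a₂ when differentiating there, the bounds holding at 0 by the smooth extension), one has (1+ξ²)^{(n+m)/2} · |a_j^{(n+m)}(ξ)| ≤ c · nⁿ / (e·d)ⁿ for j = 1, 2, where nⁿ is interpreted as 1 when n = 0. In particular, a₁ and a₂ satisfy the Fourier multiplier condition required for boundedness on L^p spaces with exponential weights e^{±d|x|}. -/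
open Real

/-- The multiplier `a₁(ξ) = tanh(πξ/2)`. -/
noncomputable def mult₁ (ξ : ℝ) : ℝ := Real.tanh (Real.pi * ξ / 2)

/-- The multiplier `a₂(ξ) = coth(πξ/2) − 2/(πξ)`, extended by `a₂(0) = 0`. -/
noncomputable def mult₂ (ξ : ℝ) : ℝ :=
  if ξ = 0 then 0
  else Real.cosh (Real.pi * ξ / 2) / Real.sinh (Real.pi * ξ / 2) - 2 / (Real.pi * ξ)

open Filter Topology

lemma aux_real_complex (F : ℂ → ℂ) (f : ℝ → ℝ) (hF : ∀ x : ℝ, AnalyticAt ℂ F x)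
    (hf : ∀ x : ℝ, f x = (F x).re) (k : ℕ) :
    iteratedDeriv k f = fun x : ℝ => (iteratedDeriv k F x).re := by
  induction k with
  | zero => funext x; simpa using hf x
  | succ k ih =>
    funext x
    rw [iteratedDeriv_succ, ih, iteratedDeriv_succ]
    have h : AnalyticAt ℂ (iteratedDeriv k F) x := by
      rw [iteratedDeriv_eq_iterate]; exact (hF x).iterated_deriv k
    exact (h.differentiableAt.hasDerivAt.real_of_complex).deriv

lemma aux_jb_pos (x : ℝ) : 0 < √(1 + x ^ 2) := by positivity

lemma aux_core (F : ℂ → ℂ) (f : ℝ → ℝ) (M r s : ℝ) (hs : 0 < s) (hsr : s < r)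
    (hF : ∀ x : ℝ, DifferentiableOn ℂ F (Metric.ball (x : ℂ) (r * √(1 + x ^ 2))))
    (hM : ∀ x : ℝ, ∀ z ∈ Metric.ball (x : ℂ) (r * √(1 + x ^ 2)), ‖F z‖ ≤ M)
    (hf : ∀ x : ℝ, f x = (F x).re) (k : ℕ) (x : ℝ) :
    (1 + x ^ 2) ^ ((k : ℝ) / 2) * |iteratedDeriv k f x| ≤ k.factorial * M / s ^ k := by
  have hr : 0 < r := hs.trans hsr
  have hA : ∀ x : ℝ, AnalyticAt ℂ F x := fun x =>
    (hF x).analyticAt (Metric.ball_mem_nhds _ (mul_pos hr (aux_jb_pos x)))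
  rw [aux_real_complex F f hA hf k]
  have hj := aux_jb_pos x
  have hsub : Metric.closedBall (x : ℂ) (s * √(1 + x ^ 2)) ⊆
      Metric.ball (x : ℂ) (r * √(1 + x ^ 2)) :=
    Metric.closedBall_subset_ball (mul_lt_mul_of_pos_right hsr hj)
  have hC := Complex.norm_iteratedDeriv_le_of_forall_mem_sphere_norm_le (f := F) (c := (x : ℂ))
    (R := s * √(1 + x ^ 2)) (C := M) k (by positivity)
    (DifferentiableOn.diffContOnCl (((hF x).mono hsub).mono Metric.closure_ball_subset_closedBall))
    (fun z hz => hM x z (hsub (Metric.sphere_subset_closedBall hz)))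
  have hp : (1 + x ^ 2) ^ ((k : ℝ) / 2) = √(1 + x ^ 2) ^ k := by
    rw [Real.sqrt_eq_rpow, ← Real.rpow_natCast _ k, ← Real.rpow_mul (by positivity)]
    congr 1; ring
  rw [hp]
  calc _ ≤ √(1 + x ^ 2) ^ k * (k.factorial * M / (s * √(1 + x ^ 2)) ^ k) := by
        gcongr
        exact (Complex.abs_re_le_norm _).trans hC
    _ = _ := by
        rw [mul_pow]; field_simp

lemma aux_num (d s M : ℝ) (hd : 0 < d) (hds : d < s) (hs : s < 1) (hM : 0 ≤ M) :
    ∃ c : ℝ, 0 < c ∧ ∀ n m : ℕ, m ≤ 4 →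
      ((n + m).factorial : ℝ) * M / s ^ (n + m) ≤ c * (n : ℝ) ^ n / (Real.exp 1 * d) ^ n := by
  have hs0 : 0 < s := hd.trans hds
  have hq : |d / s| < 1 := by
    rw [abs_of_pos (by positivity)]; exact (div_lt_one hs0).2 hds
  obtain ⟨B, hB⟩ := ((tendsto_pow_const_mul_const_pow_of_abs_lt_one 5 hq).comp
    (tendsto_add_atTop_nat 4)).bddAbove_range
  have hB' : ∀ n : ℕ, ((n : ℝ) + 4) ^ 5 * (d / s) ^ (n + 4) ≤ B := by
    intro n
    have := hB (Set.mem_range_self n)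
    simpa using this
  have hB0 : 0 ≤ B := le_trans (by positivity) (hB' 0)
  obtain ⟨A, hA0, hA⟩ : ∃ A : ℝ, 0 ≤ A ∧
      ∀ n : ℕ, (n.factorial : ℝ) ≤ A * (n + 4) * ((n : ℝ) / Real.exp 1) ^ n := by
    refine ⟨max 1 (Stirling.stirlingSeq 1), le_max_of_le_left zero_le_one, ?_⟩
    intro n
    rcases n with _ | n
    · simp only [Nat.factorial_zero, Nat.cast_one, Nat.cast_zero, pow_zero, zero_add]
      linarith [le_max_left 1 (Stirling.stirlingSeq 1)]
    · have h1 : Stirling.stirlingSeq (n + 1) ≤ Stirling.stirlingSeq 1 :=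
        Stirling.stirlingSeq'_antitone (Nat.zero_le n)
      have h2 := h1.trans (le_max_right 1 (Stirling.stirlingSeq 1))
      rw [Stirling.stirlingSeq, div_le_iff₀ (by positivity)] at h2
      refine h2.trans ?_
      rw [mul_assoc]
      gcongr
      rw [Real.sqrt_le_left (by positivity)]
      push_cast
      nlinarith [(Nat.cast_nonneg n : (0 : ℝ) ≤ n)]
  refine ⟨A * M * B / d ^ 4 + 1, by positivity, ?_⟩
  intro n m hm
  have hfac : ((n + m).factorial : ℝ) ≤ n.factorial * ((n : ℝ) + 4) ^ 4 := by
    have h1 : (n + m).factorial ≤ (n + 4).factorial := Nat.factorial_le (by omega)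
    have h2 : (n + 4).factorial ≤ n.factorial * (n + 4) ^ 4 := by
      have : (n + 4).factorial = n.factorial * ((n + 1) * (n + 2) * (n + 3) * (n + 4)) := by
        simp only [Nat.factorial_succ]; ring
      rw [this]
      apply Nat.mul_le_mul_left
      calc (n + 1) * (n + 2) * (n + 3) * (n + 4)
          ≤ (n + 4) * (n + 4) * (n + 4) * (n + 4) := by gcongr <;> omega
        _ = _ := by ring
    exact_mod_cast h1.trans h2
  have hspow : s ^ (n + 4) ≤ s ^ (n + m) := pow_le_pow_of_le_one hs0.le hs.le (by omega)
  have he := Real.exp_pos 1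
  calc ((n + m).factorial : ℝ) * M / s ^ (n + m)
      ≤ (A * (n + 4) * ((n : ℝ) / Real.exp 1) ^ n * ((n : ℝ) + 4) ^ 4) * M / s ^ (n + 4) := by
        gcongr
        exact hfac.trans (by gcongr; exact hA n)
    _ = (A * M / d ^ 4) * (((n : ℝ) + 4) ^ 5 * (d / s) ^ (n + 4)) *
          ((n : ℝ) ^ n / (Real.exp 1 * d) ^ n) := by
        simp only [div_pow, mul_pow, pow_add]
        field_simp
    _ ≤ (A * M / d ^ 4) * B * ((n : ℝ) ^ n / (Real.exp 1 * d) ^ n) := by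
        gcongr
        exact hB' n
    _ ≤ (A * M * B / d ^ 4 + 1) * ((n : ℝ) ^ n / (Real.exp 1 * d) ^ n) := by
        gcongr
        have : A * M / d ^ 4 * B = A * M * B / d ^ 4 := by ring
        linarith
    _ = _ := by ring

noncomputable def auxT (z : ℂ) : ℂ := Complex.tanh (Real.pi * z / 2)

lemma aux_cosh_normSq (u v : ℝ) :
    ‖Complex.cosh (u + v * Complex.I)‖ ^ 2 = Real.sinh u ^ 2 + Real.cos v ^ 2 := by
  rw [← Complex.normSq_eq_norm_sq, Complex.cosh_add, Complex.cosh_mul_I, Complex.sinh_mul_I,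
    ← Complex.ofReal_cosh, ← Complex.ofReal_sinh, ← Complex.ofReal_cos, ← Complex.ofReal_sin]
  simp only [Complex.normSq_apply, Complex.add_re, Complex.add_im, Complex.mul_re, Complex.mul_im,
    Complex.ofReal_re, Complex.ofReal_im, Complex.I_re, Complex.I_im]
  have h1 := Real.cosh_sq u
  have h2 := Real.sin_sq_add_cos_sq v
  ring_nf
  rw [h1]
  have h3 : Real.sin v ^ 2 = 1 - Real.cos v ^ 2 := by linarith
  rw [h3]; ring

lemma aux_sq_le_sinh_sq (u : ℝ) : u ^ 2 ≤ Real.sinh u ^ 2 := by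
  rw [sq_le_sq, Real.abs_sinh]
  exact Real.self_le_sinh_iff.2 (abs_nonneg u)

lemma aux_T_bound (r : ℝ) (hr : 0 < r) (hr1 : r < 1) : ∃ M : ℝ, 0 ≤ M ∧
    ∀ x : ℝ, ∀ z ∈ Metric.ball (x : ℂ) (r * √(1 + x ^ 2)),
      Complex.cosh (Real.pi * z / 2) ≠ 0 ∧ ‖auxT z‖ ≤ M := by
  have hq : r ^ 2 < 1 := by nlinarith
  set ρ := √((1 + r ^ 2) / 2) with hρ
  have hρ0 : 0 ≤ ρ := Real.sqrt_nonneg _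
  have hρ2 : ρ ^ 2 = (1 + r ^ 2) / 2 := Real.sq_sqrt (by positivity)
  have hρ1 : ρ < 1 := by nlinarith
  have hcρ : 0 < Real.cos (Real.pi * ρ / 2) :=
    Real.cos_pos_of_mem_Ioo ⟨by nlinarith [Real.pi_pos], by nlinarith [Real.pi_pos]⟩
  set κ := min ((1 - r ^ 2) ^ 2 / 2) (Real.cos (Real.pi * ρ / 2) ^ 2) with hκ
  have hκ0 : 0 < κ := lt_min (by have : 0 < 1 - r ^ 2 := by linarith
                                 positivity) (by positivity)
  have key : ∀ x : ℝ, ∀ z ∈ Metric.ball (x : ℂ) (r * √(1 + x ^ 2)),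
      κ ≤ ‖Complex.cosh (Real.pi * z / 2)‖ ^ 2 := by
    intro ξ z hz
    have hz2 : (z.re - ξ) ^ 2 + z.im ^ 2 ≤ r ^ 2 * (1 + ξ ^ 2) := by
      rw [Metric.mem_ball, dist_eq_norm] at hz
      have h := pow_le_pow_left₀ (norm_nonneg _) hz.le 2
      rw [mul_pow, Real.sq_sqrt (by positivity), ← Complex.normSq_eq_norm_sq,
        Complex.normSq_apply] at h
      simp only [Complex.sub_re, Complex.sub_im, Complex.ofReal_re, Complex.ofReal_im] at h
      nlinarith
    have hzz : (Real.pi * z / 2 : ℂ) = ((Real.pi * z.re / 2 : ℝ) : ℂ) +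
        ((Real.pi * z.im / 2 : ℝ) : ℂ) * Complex.I := by
      conv_lhs => rw [← Complex.re_add_im z]
      push_cast; ring
    rw [hzz, aux_cosh_normSq]
    have hmain : (1 - r ^ 2) * z.im ^ 2 ≤ r ^ 2 * (1 - r ^ 2) + r ^ 2 * z.re ^ 2 := by
      nlinarith [sq_nonneg ((1 - r ^ 2) * ξ - z.re),
        mul_le_mul_of_nonneg_left hz2 (by linarith : 0 ≤ 1 - r ^ 2)]
    by_cases hx : (1 - r ^ 2) ^ 2 / 2 ≤ z.re ^ 2
    · have h1 := aux_sq_le_sinh_sq (Real.pi * z.re / 2)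
      have h2 : z.re ^ 2 ≤ (Real.pi * z.re / 2) ^ 2 := by
        have h3 := Real.pi_gt_three
        have : (Real.pi * z.re / 2) ^ 2 = (Real.pi / 2) ^ 2 * z.re ^ 2 := by ring
        rw [this]
        have h4 : 1 ≤ (Real.pi / 2) ^ 2 := by nlinarith
        nlinarith [sq_nonneg z.re]
      have h5 : κ ≤ (1 - r ^ 2) ^ 2 / 2 := min_le_left _ _
      nlinarith [sq_nonneg (Real.cos (Real.pi * z.im / 2))]
    · push Not at hx
      have hy : z.im ^ 2 ≤ ρ ^ 2 := by
        rw [hρ2]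
        have h1 : r ^ 2 * z.re ^ 2 ≤ (1 - r ^ 2) ^ 2 / 2 := by
          nlinarith [sq_nonneg z.re]
        have h2 : (1 - r ^ 2) * z.im ^ 2 ≤ (1 - r ^ 2) * ((1 + r ^ 2) / 2) := by
          nlinarith
        exact le_of_mul_le_mul_left h2 (by linarith)
      have hy' : |z.im| ≤ ρ := abs_le_of_sq_le_sq hy hρ0
      have hc : Real.cos (Real.pi * ρ / 2) ≤ Real.cos (Real.pi * z.im / 2) := by
        rw [← Real.cos_abs (Real.pi * z.im / 2)]
        have : |Real.pi * z.im / 2| = Real.pi * |z.im| / 2 := by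
          rw [abs_div, abs_mul, abs_of_pos Real.pi_pos, abs_of_pos (two_pos : (0 : ℝ) < 2)]
        rw [this]
        apply Real.cos_le_cos_of_nonneg_of_le_pi
        · have := Real.pi_pos; positivity
        · nlinarith [Real.pi_pos]
        · have := Real.pi_pos; gcongr
      have h5 : κ ≤ Real.cos (Real.pi * ρ / 2) ^ 2 := min_le_right _ _
      have h6 := pow_le_pow_left₀ hcρ.le hc 2
      nlinarith [sq_nonneg (Real.sinh (Real.pi * z.re / 2))]
  refine ⟨√(1 + 1 / κ), Real.sqrt_nonneg _, fun x z hz => ?_⟩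
  have hk := key x z hz
  have hne : Complex.cosh (Real.pi * z / 2) ≠ 0 := by
    intro h0; rw [h0] at hk; simp at hk; linarith
  refine ⟨hne, Real.le_sqrt_of_sq_le ?_⟩
  rw [auxT, Complex.tanh_eq_sinh_div_cosh, norm_div, div_pow]
  have hpos : 0 < ‖Complex.cosh (Real.pi * z / 2)‖ ^ 2 := by linarith
  rw [div_le_iff₀ hpos]
  have h1 : ‖Complex.sinh (Real.pi * z / 2)‖ ^ 2 ≤ ‖Complex.cosh (Real.pi * z / 2)‖ ^ 2 + 1 := by
    rw [← norm_pow, ← norm_pow, Complex.sinh_sq]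
    exact (norm_sub_le _ _).trans (by simp)
  have h2 : 1 ≤ 1 / κ * ‖Complex.cosh (Real.pi * z / 2)‖ ^ 2 := by
    rw [div_mul_eq_mul_div, one_mul, one_le_div hκ0]; exact hk
  linarith

lemma aux_T_diff {z : ℂ} (h : Complex.cosh (Real.pi * z / 2) ≠ 0) :
    DifferentiableAt ℂ auxT z := by
  have : auxT = fun z : ℂ => Complex.sinh (Real.pi * z / 2) / Complex.cosh (Real.pi * z / 2) := by
    funext z; rw [auxT, Complex.tanh_eq_sinh_div_cosh]
  rw [this]
  exact DifferentiableAt.div (by fun_prop) (by fun_prop) h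

lemma aux_scale (r : ℝ) (hr : 0 < r) (x : ℝ) (z : ℂ)
    (hz : z ∈ Metric.ball (x : ℂ) (r * √(1 + x ^ 2))) (j : ℕ) :
    z / 2 ^ j ∈ Metric.ball ((x / 2 ^ j : ℝ) : ℂ) (r * √(1 + (x / 2 ^ j) ^ 2)) := by
  rw [Metric.mem_ball, dist_eq_norm] at hz ⊢
  have h : z / 2 ^ j - ((x / 2 ^ j : ℝ) : ℂ) = (z - x) / 2 ^ j := by push_cast; ring
  rw [h, norm_div, norm_pow, Complex.norm_ofNat, div_lt_iff₀ (by positivity)]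
  refine hz.trans_le ?_
  rw [mul_assoc]
  gcongr
  rw [Real.sqrt_le_left (by positivity), mul_pow, Real.sq_sqrt (by positivity)]
  have h1 : (1 : ℝ) ≤ (2 ^ j) ^ 2 := one_le_pow₀ (one_le_pow₀ (by norm_num))
  have h2 : (1 + (x / 2 ^ j) ^ 2) * (2 ^ j) ^ 2 = (2 ^ j) ^ 2 + x ^ 2 := by field_simp
  linarith

noncomputable def auxG (j : ℕ) (z : ℂ) : ℂ := (1 / 2) ^ (j + 1) * auxT (z / 2 ^ (j + 1))

noncomputable def auxF (z : ℂ) : ℂ := ∑' j, auxG j z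

lemma aux_T_real (x : ℝ) : auxT x = ((mult₁ x : ℝ) : ℂ) := by
  simp [auxT, mult₁]

lemma aux_mult₂_step (x : ℝ) : mult₂ x = 1 / 2 * mult₁ (x / 2) + 1 / 2 * mult₂ (x / 2) := by
  by_cases hx : x = 0
  · simp [hx, mult₁, mult₂]
  have hx2 : x / 2 ≠ 0 := by positivity
  simp only [mult₁, mult₂, hx, hx2, if_false]
  set w := Real.pi * (x / 2) / 2 with hw
  have hw2 : Real.pi * x / 2 = 2 * w := by rw [hw]; ring
  have hw0 : w ≠ 0 := by have := Real.pi_ne_zero; positivity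
  have hs : Real.sinh w ≠ 0 := by rwa [Ne, Real.sinh_eq_zero]
  have hc : Real.cosh w ≠ 0 := (Real.cosh_pos w).ne'
  have hpi := Real.pi_ne_zero
  rw [hw2, Real.cosh_two_mul, Real.sinh_two_mul, Real.tanh_eq_sinh_div_cosh]
  field_simp
  ring

lemma aux_mult₂_partial (x : ℝ) (N : ℕ) :
    ∑ j ∈ Finset.range N, (1 / 2 : ℝ) ^ (j + 1) * mult₁ (x / 2 ^ (j + 1)) =
      mult₂ x - (1 / 2) ^ N * mult₂ (x / 2 ^ N) := by
  induction N with
  | zero => simp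
  | succ N ih =>
    rw [Finset.sum_range_succ, ih, aux_mult₂_step (x / 2 ^ N)]
    have : x / 2 ^ N / 2 = x / 2 ^ (N + 1) := by rw [pow_succ]; field_simp
    rw [this]; ring

lemma aux_mult₂_tail (x : ℝ) :
    Tendsto (fun N : ℕ => (1 / 2 : ℝ) ^ N * mult₂ (x / 2 ^ N)) atTop (𝓝 0) := by
  by_cases hx : x = 0
  · simp [hx, mult₂]
  set w := Real.pi * x / 2 with hw
  have hw0 : w ≠ 0 := by have := Real.pi_ne_zero; positivity
  have ht : Tendsto (fun N : ℕ => w * (1 / 2 : ℝ) ^ N) atTop (𝓝[≠] 0) := by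
    rw [tendsto_nhdsWithin_iff]
    refine ⟨?_, Eventually.of_forall fun N => ?_⟩
    · simpa using (tendsto_pow_atTop_nhds_zero_of_lt_one (r := (1 / 2 : ℝ)) (by norm_num)
        (by norm_num)).const_mul w
    · simp [hw0]
  have hsl : Tendsto (fun t : ℝ => t⁻¹ * Real.sinh t) (𝓝[≠] 0) (𝓝 1) := by
    have := (hasDerivAt_iff_tendsto_slope_zero.1 (Real.hasDerivAt_sinh 0))
    simpa using this
  have hch : Tendsto (fun t : ℝ => Real.cosh t) (𝓝[≠] 0) (𝓝 1) := by
    have := (Real.continuous_cosh.tendsto 0).mono_left (nhdsWithin_le_nhds (s := {0}ᶜ))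
    simpa using this
  have hlim := (((hch.div hsl one_ne_zero).comp ht).sub_const 1).const_mul (1 / w)
  simp only [div_one, sub_self, mul_zero] at hlim
  refine hlim.congr fun N => ?_
  have hxN : x / 2 ^ N ≠ 0 := by positivity
  have hwN : Real.pi * (x / 2 ^ N) / 2 = w * (1 / 2) ^ N := by
    rw [hw, one_div, inv_pow]; ring
  have hs : Real.sinh (w * (1 / 2) ^ N) ≠ 0 := by
    rw [Ne, Real.sinh_eq_zero]; positivity
  have hpi := Real.pi_ne_zero
  have hwx : 2 / (Real.pi * (x / 2 ^ N)) = 1 / (w * (1 / 2) ^ N) := by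
    rw [← hwN]; field_simp
  simp only [mult₂, hxN, if_false, hwN, hwx, Function.comp, Pi.div_apply]
  have hh : ((1 / 2 : ℝ)) ^ N ≠ 0 := by positivity
  generalize ((1 / 2 : ℝ)) ^ N = h at *
  field_simp

lemma aux_G_bound (r M : ℝ) (hr : 0 < r)
    (hM : ∀ x : ℝ, ∀ z ∈ Metric.ball (x : ℂ) (r * √(1 + x ^ 2)),
      Complex.cosh (Real.pi * z / 2) ≠ 0 ∧ ‖auxT z‖ ≤ M)
    (x : ℝ) (z : ℂ) (hz : z ∈ Metric.ball (x : ℂ) (r * √(1 + x ^ 2))) (j : ℕ) :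
    ‖auxG j z‖ ≤ M / 2 / 2 ^ j ∧ DifferentiableAt ℂ (auxG j) z := by
  have h := hM _ _ (aux_scale r hr x z hz (j + 1))
  constructor
  · rw [auxG, norm_mul, norm_pow]
    have : ‖(1 / 2 : ℂ)‖ = 1 / 2 := by simp
    rw [this]
    calc (1 / 2 : ℝ) ^ (j + 1) * ‖auxT (z / 2 ^ (j + 1))‖ ≤ (1 / 2 : ℝ) ^ (j + 1) * M := by
          gcongr; exact h.2
      _ = _ := by rw [one_div, inv_pow, pow_succ]; field_simp
  · unfold auxG
    refine DifferentiableAt.const_mul ?_ _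
    exact DifferentiableAt.comp z (g := auxT) (f := fun z => z / 2 ^ (j + 1))
      (aux_T_diff h.1) (by fun_prop)

lemma aux_F_real (r M : ℝ) (hr : 0 < r)
    (hM : ∀ x : ℝ, ∀ z ∈ Metric.ball (x : ℂ) (r * √(1 + x ^ 2)),
      Complex.cosh (Real.pi * z / 2) ≠ 0 ∧ ‖auxT z‖ ≤ M) (x : ℝ) :
    auxF x = ((mult₂ x : ℝ) : ℂ) := by
  have hx : (x : ℂ) ∈ Metric.ball (x : ℂ) (r * √(1 + x ^ 2)) :=
    Metric.mem_ball_self (mul_pos hr (aux_jb_pos x))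
  have hsum : Summable (fun j => auxG j x) :=
    Summable.of_norm_bounded (summable_geometric_two' M)
      (fun j => (aux_G_bound r M hr hM x x hx j).1)
  have h1 := hsum.hasSum.tendsto_sum_nat
  have h2 : Tendsto (fun N => ∑ j ∈ Finset.range N, auxG j x) atTop (𝓝 ((mult₂ x : ℝ) : ℂ)) := by
    have h3 := (aux_mult₂_tail x).const_sub (mult₂ x)
    rw [sub_zero] at h3
    refine ((Complex.continuous_ofReal.tendsto _).comp h3).congr fun N => ?_
    simp only [Function.comp]
    rw [← aux_mult₂_partial, Complex.ofReal_sum]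
    refine Finset.sum_congr rfl fun j _ => ?_
    rw [Complex.ofReal_mul, ← aux_T_real, auxG]
    push_cast
    rfl
  exact tendsto_nhds_unique h1 h2

/-- For `0 < d < 1`, the multipliers `a₁` and `a₂` satisfy the
exponential-weight Fourier multiplier condition: there is `c > 0` such that for all
`n ∈ ℕ`, `m ≤ 4` and `ξ ∈ ℝ`,
`(1+ξ²)^{(n+m)/2} |a_j^{(n+m)}(ξ)| ≤ c nⁿ/(ed)ⁿ` for `j = 1,2`. -/
theorem multiplier_condition_tanh_coth (d : ℝ) (hd : 0 < d) (hd1 : d < 1) :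
    ∃ c : ℝ, 0 < c ∧ ∀ (n m : ℕ), m ≤ 4 → ∀ ξ : ℝ,
      ((1 + ξ ^ 2) ^ (((n + m : ℕ) : ℝ) / 2) *
          |iteratedDeriv (n + m) mult₁ ξ| ≤ c * (n : ℝ) ^ n / (Real.exp 1 * d) ^ n) ∧
      ((1 + ξ ^ 2) ^ (((n + m : ℕ) : ℝ) / 2) *
          |iteratedDeriv (n + m) mult₂ ξ| ≤ c * (n : ℝ) ^ n / (Real.exp 1 * d) ^ n) := by
  obtain ⟨s, hds, hs1⟩ := exists_between hd1
  obtain ⟨r, hsr, hr1⟩ := exists_between hs1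
  have hs0 : 0 < s := hd.trans hds
  have hr0 : 0 < r := hs0.trans hsr
  obtain ⟨M, hM0, hM⟩ := aux_T_bound r hr0 hr1
  obtain ⟨c, hc, hcn⟩ := aux_num d s M hd hds hs1 hM0
  refine ⟨c, hc, fun n m hm ξ => ⟨?_, ?_⟩⟩
  · refine (aux_core auxT mult₁ M r s hs0 hsr ?_ ?_ ?_ (n + m) ξ).trans (hcn n m hm)
    · exact fun x z hz => (aux_T_diff (hM x z hz).1).differentiableWithinAt
    · exact fun x z hz => (hM x z hz).2
    · intro x; rw [aux_T_real, Complex.ofReal_re]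
  · refine (aux_core auxF mult₂ M r s hs0 hsr ?_ ?_ ?_ (n + m) ξ).trans (hcn n m hm)
    · intro x
      exact Complex.differentiableOn_tsum_of_summable_norm (summable_geometric_two' M)
        (fun j z hz => (aux_G_bound r M hr0 hM x z hz j).2.differentiableWithinAt)
        Metric.isOpen_ball (fun j z hz => (aux_G_bound r M hr0 hM x z hz j).1)
    · intro x z hz
      exact tsum_of_norm_bounded (hasSum_geometric_two' M)
        (fun j => (aux_G_bound r M hr0 hM x z hz j).1)
    · intro x; rw [aux_F_real r M hr0 hM, Complex.ofReal_re]
end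

section
/- There exists a constant C > 0 such that for every n ∈ ℕ and every ξ ∈ ℝ, (1+ξ²)^{n/2} · |dⁿ/dξⁿ [tanh(πξ/2)]| ≤ C · n!. That is, the iterated derivatives of ξ ↦ tanh(πξ/2) decay like ⟨ξ⟩^{−n} with factorial-growth constants. -/
open Real

/-- Telescoping majorant. -/
lemma aux_hasSum (a : ℝ) (ha : 1 ≤ a) :
    HasSum (fun k : ℕ => 3 * (a / ((k + a) * (k + 1 + a)))) 3 := by
  rw [hasSum_iff_tendsto_nat_of_nonneg (fun k => by positivity)]
  have h : ∀ n : ℕ, ∑ k ∈ Finset.range n, 3 * (a / (((k : ℝ) + a) * (k + 1 + a)))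
      = 3 * (1 - a / (n + a)) := by
    intro n
    induction n with
    | zero =>
      have : a ≠ 0 := by positivity
      simp [this]
    | succ n ih =>
      rw [Finset.sum_range_succ, ih]
      have h1 : (n : ℝ) + a ≠ 0 := by positivity
      have h2 : (n : ℝ) + 1 + a ≠ 0 := by positivity
      push_cast
      field_simp
      ring
  simp_rw [h]
  have h3 : Filter.Tendsto (fun n : ℕ => a / ((n : ℝ) + a)) Filter.atTop (nhds 0) :=
    Filter.Tendsto.div_atTop tendsto_const_nhds
      (Filter.tendsto_atTop_add_const_right _ _ tendsto_natCast_atTop_atTop)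
  simpa using (h3.const_sub 1).const_mul 3

lemma aux_term (a : ℝ) (ha : 1 ≤ a) (k : ℕ) :
    a / (a ^ 2 + 4 * k ^ 2 + 4 * k) ≤ 3 * (a / ((k + a) * (k + 1 + a))) := by
  have hk : (0 : ℝ) ≤ k := by positivity
  rw [← mul_div_assoc, div_le_div_iff₀ (by positivity) (by positivity)]
  have : (k + a) * (k + 1 + a) ≤ 3 * (a ^ 2 + 4 * (k : ℝ) ^ 2 + 4 * k) := by
    nlinarith [sq_nonneg ((k : ℝ) - a)]
  nlinarith

lemma aux_norm (x : ℝ) (m : ℤ) :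
    (2 * ‖(Complex.I * x + 1) / 2 + (m : ℂ)‖) ^ 2 = x ^ 2 + (2 * m + 1) ^ 2 := by
  rw [mul_pow, ← Complex.normSq_eq_norm_sq, Complex.normSq_apply]
  simp
  ring

lemma aux_pow (a R : ℝ) (ha : 1 ≤ a) (haR : a ≤ R) (n : ℕ) (hn : 1 ≤ n) :
    a ^ n / R ^ (n + 1) ≤ a / R ^ 2 := by
  obtain ⟨k, rfl⟩ := Nat.exists_eq_add_of_le hn
  have hR : 0 < R := by linarith
  rw [div_le_div_iff₀ (by positivity) (by positivity)]
  have : a ^ k ≤ R ^ k := by gcongr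
  calc a ^ (1 + k) * R ^ 2 = a ^ k * (a * R ^ 2) := by ring
    _ ≤ R ^ k * (a * R ^ 2) := by gcongr
    _ = a * R ^ (1 + k + 1) := by ring

lemma aux_tsum (x : ℝ) (n : ℕ) (hn : 1 ≤ n) :
    √(1 + x ^ 2) ^ n * ‖∑' m : ℤ, 1 / ((Complex.I * x + 1) / 2 + (m : ℂ)) ^ (n + 1)‖
      ≤ 2 ^ (n + 1) * 6 := by
  set a := √(1 + x ^ 2) with ha
  have ha2 : a ^ 2 = 1 + x ^ 2 := Real.sq_sqrt (by positivity)
  have ha1 : 1 ≤ a := Real.one_le_sqrt.2 (by nlinarith [sq_nonneg x])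
  have hs := ((aux_hasSum a ha1).int_rec (aux_hasSum a ha1)).mul_left (2 ^ (n + 1) / a ^ n)
  have key : ∀ (m : ℤ) (k : ℕ), ((m : ℝ) = k ∨ (m : ℝ) = -(k + 1)) →
      ‖1 / ((Complex.I * x + 1) / 2 + (m : ℂ)) ^ (n + 1)‖ ≤
        2 ^ (n + 1) / a ^ n * (3 * (a / ((k + a) * (k + 1 + a)))) := by
    intro m k hmk
    have hN := aux_norm x m
    set N := ‖(Complex.I * x + 1) / 2 + (m : ℂ)‖ with hNdef
    have hN2 : (2 * N) ^ 2 = a ^ 2 + 4 * (k : ℝ) ^ 2 + 4 * k := by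
      rw [hN, ha2]
      rcases hmk with h | h <;> rw [h] <;> ring
    have hNa : a ≤ 2 * N := by
      apply le_of_sq_le_sq _ (by positivity)
      rw [hN2]
      have hk : (0 : ℝ) ≤ k := by positivity
      nlinarith
    have hNpos : 0 < N := by linarith
    have h1 := (aux_pow a (2 * N) ha1 hNa n hn).trans (hN2 ▸ aux_term a ha1 k)
    have h2 : ‖1 / ((Complex.I * x + 1) / 2 + (m : ℂ)) ^ (n + 1)‖
        = 2 ^ (n + 1) / a ^ n * (a ^ n / (2 * N) ^ (n + 1)) := by
      rw [norm_div, norm_pow, norm_one, ← hNdef, mul_pow]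
      field_simp
    rw [h2]
    gcongr
  have := tsum_of_norm_bounded hs (f := fun m : ℤ =>
    1 / ((Complex.I * x + 1) / 2 + (m : ℂ)) ^ (n + 1)) (by
      intro m
      rcases m with k | k
      · exact key _ k (Or.inl (by simp))
      · exact key _ k (Or.inr (by rw [Int.cast_negSucc]; push_cast; ring)))
  calc _ ≤ a ^ n * (2 ^ (n + 1) / a ^ n * (3 + 3)) := by gcongr
    _ = _ := by field_simp; ring

lemma aux_tanh (x : ℝ) : Real.tanh (π * x / 2) =
    (Complex.I / π * (π * Complex.cot (π * ((Complex.I * x + 1) / 2)))).re := by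
  have h : Complex.I / π * (π * Complex.cot (π * ((Complex.I * x + 1) / 2)))
      = ((Real.tanh (π * x / 2) : ℝ) : ℂ) := by
    have hpi : (π : ℂ) ≠ 0 := by exact_mod_cast Real.pi_ne_zero
    have e : (π : ℂ) * ((Complex.I * x + 1) / 2) = ((π * x / 2 : ℝ) : ℂ) * Complex.I + π / 2 := by
      push_cast; ring
    rw [e, Complex.ofReal_tanh, Complex.cot, Complex.cos_add_pi_div_two, Complex.sin_add_pi_div_two,
      Complex.sin_mul_I, Complex.cos_mul_I, Complex.tanh_eq_sinh_div_cosh]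
    have : Complex.I * Complex.I = -1 := Complex.I_mul_I
    field_simp
    linear_combination (-Complex.sinh ((π * x / 2 : ℝ) : ℂ) / Complex.cosh ((π * x / 2 : ℝ) : ℂ)) * this
  rw [h, Complex.ofReal_re]

lemma aux_iter (n : ℕ) : ∀ x : ℝ, 0 < x →
    iteratedDeriv n (fun x : ℝ => Real.tanh (π * x / 2)) x =
    (Complex.I / π * ((Complex.I / 2) ^ n *
      iteratedDerivWithin n (fun z : ℂ => π * Complex.cot (π * z))
        UpperHalfPlane.upperHalfPlaneSet ((Complex.I * x + 1) / 2))).re := by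
  have hmem : ∀ x : ℝ, 0 < x →
      (Complex.I * x + 1) / 2 ∈ UpperHalfPlane.upperHalfPlaneSet := by
    intro x hx
    simp [UpperHalfPlane.upperHalfPlaneSet, hx]
  have hop := UpperHalfPlane.isOpen_upperHalfPlaneSet
  induction n with
  | zero =>
    intro x hx
    simp only [iteratedDeriv_zero, iteratedDerivWithin_zero, pow_zero, one_mul]
    exact aux_tanh x
  | succ n ih =>
    intro x hx
    rw [iteratedDeriv_succ]
    have hev : iteratedDeriv n (fun x : ℝ => Real.tanh (π * x / 2)) =ᶠ[nhds x] fun x : ℝ =>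
      (Complex.I / π * ((Complex.I / 2) ^ n *
        iteratedDerivWithin n (fun z : ℂ => π * Complex.cot (π * z))
          UpperHalfPlane.upperHalfPlaneSet ((Complex.I * x + 1) / 2))).re := by
      filter_upwards [lt_mem_nhds hx] with y hy using ih y hy
    rw [hev.deriv_eq]
    set z : ℂ := (Complex.I * x + 1) / 2 with hz
    have hzm : z ∈ UpperHalfPlane.upperHalfPlaneSet := hmem x hx
    have hcd : ContDiffOn ℂ (n + 1 : ℕ) (fun z : ℂ => π * Complex.cot (π * z))
        UpperHalfPlane.upperHalfPlaneSet := by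
      intro w hw
      exact ContDiffWithinAt.mul (by fun_prop) (cot_pi_mul_contDiffWithinAt _
        (UpperHalfPlane.coe_mem_integerComplement ⟨w, hw⟩))
    have hd : DifferentiableAt ℂ (iteratedDerivWithin n (fun z : ℂ => π * Complex.cot (π * z))
        UpperHalfPlane.upperHalfPlaneSet) z :=
      ((hcd.differentiableOn_iteratedDerivWithin (by exact_mod_cast Nat.lt_succ_self n)
        hop.uniqueDiffOn) z hzm).differentiableAt (hop.mem_nhds hzm)
    have hd' := hd.hasDerivAt
    rw [← derivWithin_of_isOpen hop hzm, ← iteratedDerivWithin_succ] at hd'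
    have hg : HasDerivAt (fun y : ℝ => (Complex.I * (y : ℂ) + 1) / 2) (Complex.I / 2) x := by
      simpa using (((Complex.ofRealCLM.hasDerivAt (x := x)).const_mul Complex.I).add_const 1).div_const 2
    have hc := ((hd'.comp x hg).const_mul ((Complex.I / 2) ^ n)).const_mul (Complex.I / π)
    have hr := (Complex.reCLM.hasFDerivAt.comp_hasDerivAt x hc).deriv
    refine Eq.trans hr ?_
    simp only [Complex.reCLM_apply]
    congr 1
    ring

lemma aux_smooth (n : ℕ) : ContDiff ℝ n (fun x : ℝ => Real.tanh (π * x / 2)) := by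
  have : (fun x : ℝ => Real.tanh (π * x / 2)) =
      fun x : ℝ => Real.sinh (π * x / 2) / Real.cosh (π * x / 2) := by
    funext x; exact Real.tanh_eq_sinh_div_cosh _
  rw [this]
  exact ContDiff.div (Real.contDiff_sinh.comp (by fun_prop)) (Real.contDiff_cosh.comp (by fun_prop))
    (fun x => (Real.cosh_pos _).ne')

lemma aux_pos (n : ℕ) (hn : 1 ≤ n) (x : ℝ) (hx : 0 < x) :
    √(1 + x ^ 2) ^ n * |iteratedDeriv n (fun x : ℝ => Real.tanh (π * x / 2)) x|
      ≤ 12 * (Nat.factorial n : ℝ) := by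
  rw [aux_iter n x hx]
  have hzm : (Complex.I * x + 1) / 2 ∈ UpperHalfPlane.upperHalfPlaneSet := by
    simp [UpperHalfPlane.upperHalfPlaneSet, hx]
  rw [iteratedDerivWithin_cot_pi_mul_eq_mul_tsum_div_pow hn hzm]
  have ht := aux_tsum x n hn
  set S := ∑' m : ℤ, 1 / ((Complex.I * x + 1) / 2 + (m : ℂ)) ^ (n + 1)
  have hpi : 1 ≤ π := by linarith [Real.pi_gt_three]
  calc _ ≤ √(1 + x ^ 2) ^ n * ‖Complex.I / π * ((Complex.I / 2) ^ n *
        ((-1) ^ n * (Nat.factorial n) * S))‖ := by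
        gcongr; exact Complex.abs_re_le_norm _
    _ = (√(1 + x ^ 2) ^ n * ‖S‖) * ((Nat.factorial n : ℝ) / 2 ^ n * (1 / π)) := by
        simp [abs_of_pos Real.pi_pos]
        field_simp
    _ ≤ (2 ^ (n + 1) * 6) * ((Nat.factorial n : ℝ) / 2 ^ n * 1) := by
        gcongr
        rw [div_le_one (by positivity)]; exact hpi
    _ = _ := by field_simp; ring

/-- The iterated derivatives of `ξ ↦ tanh(πξ/2)` decay like `⟨ξ⟩^{−n}`
with factorial constants: there is `C > 0` with
`(1+ξ²)^{n/2} |dⁿ/dξⁿ tanh(πξ/2)| ≤ C·n!` for all `n` and `ξ`. -/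
theorem tanh_iteratedDeriv_decay :
    ∃ C : ℝ, 0 < C ∧ ∀ (n : ℕ) (ξ : ℝ),
      (1 + ξ ^ 2) ^ ((n : ℝ) / 2) *
          |iteratedDeriv n (fun x : ℝ => Real.tanh (Real.pi * x / 2)) ξ|
        ≤ C * (Nat.factorial n : ℝ) := by
  refine ⟨12, by norm_num, fun n ξ => ?_⟩
  have hpow : (1 + ξ ^ 2) ^ ((n : ℝ) / 2) = √(1 + ξ ^ 2) ^ n := by
    rw [Real.sqrt_eq_rpow, ← Real.rpow_natCast _ n, ← Real.rpow_mul (by positivity)]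
    congr 1; ring
  rw [hpow]
  rcases Nat.eq_zero_or_pos n with rfl | hn
  · simp only [pow_zero, iteratedDeriv_zero, one_mul, Nat.factorial_zero, Nat.cast_one, mul_one]
    rw [abs_le]
    constructor <;> linarith [Real.tanh_lt_one (π * ξ / 2), Real.neg_one_lt_tanh (π * ξ / 2)]
  have hnonneg : ∀ x : ℝ, 0 ≤ x →
      √(1 + x ^ 2) ^ n * |iteratedDeriv n (fun x : ℝ => Real.tanh (π * x / 2)) x|
      ≤ 12 * (Nat.factorial n : ℝ) := by
    have hcont := (aux_smooth n).continuous_iteratedDeriv'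
    have hcl : IsClosed {x : ℝ | √(1 + x ^ 2) ^ n *
        |iteratedDeriv n (fun x : ℝ => Real.tanh (π * x / 2)) x|
        ≤ 12 * (Nat.factorial n : ℝ)} :=
      isClosed_le (by fun_prop) continuous_const
    have hsub := hcl.closure_subset_iff.2 (fun x (hx : x ∈ Set.Ioi (0 : ℝ)) => aux_pos n hn x hx)
    rw [closure_Ioi] at hsub
    exact fun x hx => hsub hx
  rcases le_total 0 ξ with h | h
  · exact hnonneg ξ h
  · have h1 := hnonneg (-ξ) (by linarith)
    have h2 := iteratedDeriv_comp_neg n (fun x : ℝ => Real.tanh (π * x / 2)) ξ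
    have h3 : (fun x : ℝ => Real.tanh (π * -x / 2)) = fun x => - Real.tanh (π * x / 2) := by
      funext x
      rw [← Real.tanh_neg]; congr 1; ring
    rw [h3, iteratedDeriv_fun_neg] at h2
    have h4 := congrArg abs h2
    simp only [smul_eq_mul, abs_mul, abs_neg, abs_pow, abs_one, one_pow, one_mul] at h4
    rw [h4]
    simpa using h1
end

section
/- For every ξ ∈ ℝ, the series Σ_{k=1}^∞ 1/((2k−1)² + ξ²) converges and tanh(πξ/2) = (4ξ/π) · Σ_{k=1}^∞ 1/((2k−1)² + ξ²). -/
open Real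

lemma coth_aux (x : ℝ) (hx : x ≠ 0) :
    HasSum (fun n : ℕ => 2 * x / (((n : ℝ) + 1) ^ 2 + x ^ 2))
      (π * (Real.cosh (π * x) / Real.sinh (π * x)) - 1 / x) := by
  have hz : (x * Complex.I : ℂ) ∈ Complex.integerComplement := by
    rintro ⟨n, hn⟩
    have := congrArg Complex.im hn
    simp at this
    exact hx this.symm
  have h1 := (summable_cotTerm hz).hasSum
  have h2 := cot_series_rep' hz
  simp only [cotTerm] at h1
  rw [← h2] at h1
  have h3 := h1.mul_left Complex.I
  rw [← Complex.hasSum_ofReal]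
  have hxC : (x : ℂ) ≠ 0 := by exact_mod_cast hx
  have hI : Complex.I ^ 2 = -1 := Complex.I_sq
  convert! h3 using 1
  · funext n
    have e := cotTerm_identity hz n
    simp only [cotTerm] at e
    rw [e]
    have hp : (((n : ℝ) + 1) ^ 2 + x ^ 2) ≠ 0 := by positivity
    have hpC : (((n : ℂ) + 1) ^ 2 + (x : ℂ) ^ 2) ≠ 0 := by exact_mod_cast hp
    have : ((x * Complex.I + (n + 1)) * (x * Complex.I - (n + 1)) : ℂ)
        = -(((n : ℂ) + 1) ^ 2 + (x : ℂ) ^ 2) := by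
      linear_combination (x : ℂ) ^ 2 * hI
    rw [this]
    push_cast
    field_simp
    linear_combination hI
  · have hs : Real.sinh (π * x) ≠ 0 := by
      rw [Ne, Real.sinh_eq_zero]
      exact mul_ne_zero Real.pi_ne_zero hx
    have hsC : Complex.sinh (π * x) ≠ 0 := by exact_mod_cast hs
    rw [← mul_assoc, Complex.cot_eq_cos_div_sin, Complex.cos_mul_I, Complex.sin_mul_I]
    push_cast
    have hI0 := Complex.I_ne_zero
    field_simp

/-- Fractional series expansion of the hyperbolic tangent: for every
`ξ ∈ ℝ`, the series `Σ_{k≥1} 1/((2k−1)² + ξ²)` converges and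
`tanh(πξ/2) = (4ξ/π) Σ_{k≥1} 1/((2k−1)² + ξ²)`. -/
theorem tanh_fractional_series (ξ : ℝ) :
    Summable (fun k : ℕ => 1 / (((2 * (k + 1) - 1 : ℝ)) ^ 2 + ξ ^ 2)) ∧
    Real.tanh (Real.pi * ξ / 2)
      = (4 * ξ / Real.pi) *
        ∑' k : ℕ, 1 / (((2 * (k + 1) - 1 : ℝ)) ^ 2 + ξ ^ 2) := by
  have hsum : Summable (fun k : ℕ => 1 / (((2 * (k + 1) - 1 : ℝ)) ^ 2 + ξ ^ 2)) := by
    have h0 : Summable (fun k : ℕ => 1 / ((k : ℝ) + 1) ^ 2) := by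
      have := (summable_nat_add_iff 1).mpr
        (Real.summable_one_div_nat_pow.mpr (by norm_num : 1 < 2))
      simpa using this
    refine Summable.of_nonneg_of_le (fun k => by positivity) (fun k => ?_) h0
    have hk : (0 : ℝ) ≤ k := Nat.cast_nonneg k
    apply one_div_le_one_div_of_le (by positivity)
    nlinarith [sq_nonneg ξ]
  refine ⟨hsum, ?_⟩
  by_cases hξ : ξ = 0
  · simp [hξ]
  have hA := coth_aux ξ hξ
  have hB := (coth_aux (ξ / 2) (by simpa using hξ)).mul_left (1 / 2)
  have hC := hsum.hasSum.mul_left (2 * ξ)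
  set S := ∑' k : ℕ, 1 / (((2 * (k + 1) - 1 : ℝ)) ^ 2 + ξ ^ 2) with hS
  have hD := HasSum.even_add_odd (f := fun n : ℕ => 2 * ξ / (((n : ℝ) + 1) ^ 2 + ξ ^ 2))
    (m := 2 * ξ * S) (m' := 1 / 2 * (π * (Real.cosh (π * (ξ / 2)) / Real.sinh (π * (ξ / 2)))
      - 1 / (ξ / 2)))
    (by
      convert! hC using 1
      funext k
      push_cast
      rw [show (2 * ((k : ℝ) + 1) - 1) = 2 * k + 1 by ring]
      ring)
    (by
      convert! hB using 1
      funext k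
      push_cast
      have h1 : (2 * (k : ℝ) + 1 + 1) ^ 2 + ξ ^ 2 ≠ 0 := by positivity
      have h2 : ((k : ℝ) + 1) ^ 2 + (ξ / 2) ^ 2 ≠ 0 := by positivity
      rw [show (2 * (k : ℝ) + 1 + 1) ^ 2 + ξ ^ 2 = 4 * (((k : ℝ) + 1) ^ 2 + (ξ / 2) ^ 2) by ring]
      field_simp
      try ring)
  have hE := hA.unique hD
  have hy : π * ξ = 2 * (π * (ξ / 2)) := by ring
  rw [hy, Real.sinh_two_mul, Real.cosh_two_mul] at hE
  rw [show π * ξ / 2 = π * (ξ / 2) by ring, Real.tanh_eq_sinh_div_cosh]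
  have hs : Real.sinh (π * (ξ / 2)) ≠ 0 := by
    rw [Ne, Real.sinh_eq_zero]
    exact mul_ne_zero Real.pi_ne_zero (by simpa using hξ)
  have hc : Real.cosh (π * (ξ / 2)) ≠ 0 := (Real.cosh_pos _).ne'
  generalize Real.sinh (π * (ξ / 2)) = s at *
  generalize Real.cosh (π * (ξ / 2)) = c at *
  have hπ := Real.pi_ne_zero
  have key : 2 * ξ * S = π / 2 * (s / c) := by
    have : 2 * ξ * S = π * ((c ^ 2 + s ^ 2) / (2 * s * c)) - 1 / ξ
      - 1 / 2 * (π * (c / s) - 1 / (ξ / 2)) := by linarith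
    rw [this]
    field_simp
    ring
  have : 4 * ξ / π * S = 2 / π * (2 * ξ * S) := by ring
  rw [this, key]
  field_simp
end

section
/- For every n ∈ ℕ and every ξ ∈ ℝ, the n-th derivative of ξ ↦ tanh(πξ/2) satisfies dⁿ/dξⁿ [tanh(πξ/2)] = (−1)ⁿ · n! · (2/π) · Σ_{k=1}^∞ [ (ξ + i(2k−1))^{−(n+1)} + (ξ − i(2k−1))^{−(n+1)} ], where the series on the right converges (in ℂ) and its sum is real. -/
open Real Complex

noncomputable def tT (n k : ℕ) (x : ℝ) : ℂ :=
  ((x : ℂ) + Complex.I * (2 * (k + 1) - 1)) ^ (-((n : ℤ) + 1)) +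
      ((x : ℂ) - Complex.I * (2 * (k + 1) - 1)) ^ (-((n : ℤ) + 1))

lemma tT_norm_aux (k : ℕ) (x : ℝ) :
    ((k:ℝ) + 1) ≤ ‖(x : ℂ) + Complex.I * (2 * (k + 1) - 1)‖ ∧
    ((k:ℝ) + 1) ≤ ‖(x : ℂ) - Complex.I * (2 * (k + 1) - 1)‖ := by
  have hk : (0:ℝ) ≤ k := Nat.cast_nonneg k
  constructor
  · refine le_trans ?_ (Complex.abs_im_le_norm _)
    refine le_trans ?_ (le_abs_self _)
    simp
    linarith
  · refine le_trans ?_ (Complex.abs_im_le_norm _)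
    refine le_trans ?_ (neg_le_abs _)
    simp
    linarith

lemma tT_bound (n k : ℕ) (x : ℝ) : ‖tT (n+1) k x‖ ≤ 2 * (1 / ((k:ℝ)+1)^2) := by
  obtain ⟨h1, h2⟩ := tT_norm_aux k x
  have hk : (0:ℝ) ≤ k := Nat.cast_nonneg k
  have key : ∀ w : ℂ, (k:ℝ) + 1 ≤ ‖w‖ → ‖w ^ (-(((n+1 : ℕ) : ℤ) + 1))‖ ≤ 1 / ((k:ℝ)+1)^2 := by
    intro w hw
    rw [zpow_neg, norm_inv, ← one_div]
    have : (((n+1 : ℕ) : ℤ) + 1) = ((n+2 : ℕ) : ℤ) := by push_cast; ring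
    rw [this, zpow_natCast, norm_pow]
    apply one_div_le_one_div_of_le (by positivity)
    calc ((k:ℝ)+1)^2 ≤ ((k:ℝ)+1)^(n+2) := pow_le_pow_right₀ (by linarith) (by omega)
      _ ≤ _ := by gcongr
  calc _ ≤ _ := norm_add_le _ _
    _ ≤ _ := by linarith [key _ h1, key _ h2]

lemma tT_bsum : Summable (fun k : ℕ => 2 * (1 / ((k:ℝ)+1)^2)) := by
  apply Summable.mul_left
  have := (summable_nat_add_iff 1).2 (Real.summable_one_div_nat_pow.2 (by norm_num : 1 < 2))
  simpa using this

lemma tT_ne (k : ℕ) (x : ℝ) : (x : ℂ) + Complex.I * (2 * (k + 1) - 1) ≠ 0 ∧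
    (x : ℂ) - Complex.I * (2 * (k + 1) - 1) ≠ 0 := by
  obtain ⟨h1, h2⟩ := tT_norm_aux k x
  have hk : (0:ℝ) ≤ k := Nat.cast_nonneg k
  exact ⟨norm_pos_iff.1 (by linarith), norm_pos_iff.1 (by linarith)⟩

lemma tT_deriv (n k : ℕ) (x : ℝ) : HasDerivAt (tT n k) (-((n:ℂ)+1) * tT (n+1) k x) x := by
  obtain ⟨h1, h2⟩ := tT_ne k x
  have e : HasDerivAt (fun y : ℝ => (y : ℂ)) 1 x := Complex.ofRealCLM.hasDerivAt
  have a := (hasDerivAt_zpow (-((n : ℤ) + 1)) _ (Or.inl h1)).comp x (e.add_const _)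
  have b := (hasDerivAt_zpow (-((n : ℤ) + 1)) _ (Or.inl h2)).comp x (e.sub_const _)
  have c := a.add b
  refine c.congr_deriv ?_
  have : -((n : ℤ) + 1) - 1 = -(((n+1 : ℕ) : ℤ) + 1) := by push_cast; ring
  rw [this, tT]
  push_cast
  ring

lemma tT_zero (k : ℕ) : tT 0 k 0 = 0 := by
  simp [tT]

lemma tT_im (n k : ℕ) (x : ℝ) : (tT n k x).im = 0 := by
  rw [← Complex.conj_eq_iff_im, tT]
  simp only [map_add, map_zpow₀, map_sub, map_mul, Complex.conj_ofReal, Complex.conj_I,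
    Complex.conj_natCast, map_one, map_ofNat]
  ring_nf

lemma tT_dsum (n : ℕ) : Summable (fun k : ℕ => ((n:ℝ)+1) * (2 * (1 / ((k:ℝ)+1)^2))) :=
  tT_bsum.mul_left _

lemma tT_dbound (n k : ℕ) (x : ℝ) :
    ‖-((n:ℂ)+1) * tT (n+1) k x‖ ≤ ((n:ℝ)+1) * (2 * (1 / ((k:ℝ)+1)^2)) := by
  rw [norm_mul, norm_neg]
  have : ‖(n:ℂ)+1‖ = (n:ℝ)+1 := by
    rw [← Nat.cast_succ, Complex.norm_natCast]; simp
  rw [this]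
  exact mul_le_mul_of_nonneg_left (tT_bound n k x) (by positivity)

lemma tT_summable (n : ℕ) (x : ℝ) : Summable (fun k => tT n k x) := by
  rcases n with _ | n
  · exact summable_of_summable_hasDerivAt (tT_dsum 0) (fun k y => tT_deriv 0 k y)
      (fun k y => tT_dbound 0 k y) (y₀ := 0) (by simp [tT_zero, summable_zero]) x
  · exact Summable.of_norm_bounded tT_bsum (fun k => tT_bound n k x)

lemma tT_tsum_deriv (n : ℕ) (x : ℝ) :
    HasDerivAt (fun y => ∑' k, tT n k y) (-((n:ℂ)+1) * ∑' k, tT (n+1) k x) x := by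
  rw [← tsum_mul_left]
  exact hasDerivAt_tsum (tT_dsum n) (fun k y => tT_deriv n k y)
      (fun k y => tT_dbound n k y) (tT_summable n 0) x

lemma tT_tsum_im (n : ℕ) (x : ℝ) : (∑' k, tT n k x).im = 0 := by
  rw [Complex.im_tsum (tT_summable n x)]
  simp [tT_im]

lemma tT_base (x : ℝ) : ((Real.tanh (Real.pi * x / 2) : ℝ) : ℂ)
    = (2 / Real.pi) * ∑' k, tT 0 k x := by
  by_cases hx : x = 0
  · subst hx; simp [tT_zero]
  have hI : ∀ r : ℝ, r ≠ 0 → Complex.I * r ∈ Complex.integerComplement := by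
    rintro r hr ⟨m, hm⟩
    have := congrArg Complex.im hm
    simp at this
    exact hr this.symm
  have h1 := hI (x/2) (by simpa using hx)
  have h2 := hI x hx
  have c1 := cot_series_rep' h1
  have c2 := cot_series_rep' h2
  have s2 := summable_cotTerm h2
  have ev : ∀ k : ℕ, (1 / (Complex.I * x - (((2 * k : ℕ) : ℂ) + 1)) +
      1 / (Complex.I * x + (((2 * k : ℕ) : ℂ) + 1))) = -Complex.I * tT 0 k x := by
    intro k
    obtain ⟨n1, n2⟩ := tT_ne k x
    have e1 : Complex.I * x - (((2 * k : ℕ) : ℂ) + 1)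
        = Complex.I * ((x : ℂ) + Complex.I * (2 * (k + 1) - 1)) := by
      push_cast
      linear_combination (-(2 * (k:ℂ) + 1)) * Complex.I_mul_I
    have e2 : Complex.I * x + (((2 * k : ℕ) : ℂ) + 1)
        = Complex.I * ((x : ℂ) - Complex.I * (2 * (k + 1) - 1)) := by
      push_cast
      linear_combination (2 * (k:ℂ) + 1) * Complex.I_mul_I
    rw [e1, e2, tT]
    simp only [one_div, mul_inv, Complex.inv_I, Nat.cast_zero, zero_add, zpow_neg, zpow_one]
    ring
  have od : ∀ k : ℕ, (1 / (Complex.I * x - (((2 * k + 1 : ℕ) : ℂ) + 1)) +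
      1 / (Complex.I * x + (((2 * k + 1 : ℕ) : ℂ) + 1))) =
      (1 / 2) * (1 / (Complex.I * (x / 2 : ℝ) - ((k : ℂ) + 1)) +
        1 / (Complex.I * (x / 2 : ℝ) + ((k : ℂ) + 1))) := by
    intro k
    have e1 : Complex.I * x - (((2 * k + 1 : ℕ) : ℂ) + 1)
        = 2 * (Complex.I * (x / 2 : ℝ) - ((k : ℂ) + 1)) := by
      push_cast
      ring
    have e2 : Complex.I * x + (((2 * k + 1 : ℕ) : ℂ) + 1)
        = 2 * (Complex.I * (x / 2 : ℝ) + ((k : ℂ) + 1)) := by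
      push_cast
      ring
    rw [e1, e2]
    simp only [one_div, mul_inv]
    ring
  have hs : Summable (fun n : ℕ => (1 / (Complex.I * x - ((n : ℂ) + 1)) +
      1 / (Complex.I * x + ((n : ℂ) + 1)))) := s2
  have hsplit := tsum_even_add_odd
    (f := fun n : ℕ => (1 / (Complex.I * x - ((n : ℂ) + 1)) +
      1 / (Complex.I * x + ((n : ℂ) + 1))))
    (hs.comp_injective (i := fun k : ℕ => 2 * k) (fun a b h => by simpa using h))
    (hs.comp_injective (i := fun k : ℕ => 2 * k + 1) (fun a b h => by simpa using h))
  simp only [ev, od] at hsplit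
  rw [tsum_mul_left, tsum_mul_left, ← c1, ← c2] at hsplit
  set F := ∑' k, tT 0 k x
  have hw1 : (π : ℂ) * (Complex.I * (x / 2 : ℝ)) = ((π * x / 2 : ℝ) : ℂ) * Complex.I := by
    push_cast; ring
  have hw2 : (π : ℂ) * (Complex.I * x) = ((2 * (π * x / 2) : ℝ) : ℂ) * Complex.I := by
    push_cast; ring
  rw [hw1, hw2] at hsplit
  have hy : π * x / 2 ≠ 0 := by have := Real.pi_ne_zero; positivity
  have hpi : (π : ℂ) ≠ 0 := by exact_mod_cast Real.pi_ne_zero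
  have hxc : (x : ℂ) ≠ 0 := by exact_mod_cast hx
  generalize π * x / 2 = y at hsplit hy
  have hS : (Real.sinh y : ℂ) ≠ 0 := by
    exact_mod_cast (Real.sinh_ne_zero.2 hy)
  have hC : (Real.cosh y : ℂ) ≠ 0 := by exact_mod_cast (Real.cosh_pos y).ne'
  rw [Complex.cot, Complex.cot, Complex.cos_mul_I, Complex.sin_mul_I, Complex.cos_mul_I,
    Complex.sin_mul_I, ← Complex.ofReal_cosh, ← Complex.ofReal_cosh, ← Complex.ofReal_sinh,
    ← Complex.ofReal_sinh, Real.cosh_two_mul, Real.sinh_two_mul] at hsplit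
  rw [Real.tanh_eq_sinh_div_cosh]
  push_cast at hsplit hS hC ⊢
  have hI0 := Complex.I_ne_zero
  have hI2 : Complex.I ^ 2 = -1 := Complex.I_sq
  field_simp at hsplit ⊢
  rw [hI2] at hsplit
  apply mul_right_cancel₀ (mul_ne_zero hS hxc)
  linear_combination -hsplit

lemma tT_main (n : ℕ) : ∀ x : ℝ, iteratedDeriv n (fun x : ℝ => Real.tanh (Real.pi * x / 2)) x
    = (-1) ^ n * (Nat.factorial n : ℝ) * (2 / Real.pi) * (∑' k, tT n k x).re := by
  induction n with
  | zero =>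
    intro x
    have := congrArg Complex.re (tT_base x)
    rw [iteratedDeriv_zero]
    rw [Complex.ofReal_re] at this
    rw [this, show (2 / (Real.pi:ℂ)) = ((2 / Real.pi : ℝ) : ℂ) by push_cast; rfl,
      Complex.re_ofReal_mul]
    simp
  | succ n ih =>
    intro x
    rw [iteratedDeriv_succ, funext ih]
    have h := Complex.reCLM.hasFDerivAt.comp_hasDerivAt x (tT_tsum_deriv n x)
    have h' := (h.const_mul ((-1) ^ n * (Nat.factorial n : ℝ) * (2 / Real.pi))).deriv
    refine Eq.trans h' ?_
    have : -((n:ℂ)+1) = ((-((n:ℝ)+1) : ℝ) : ℂ) := by push_cast; rfl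
    rw [this, Complex.reCLM_apply, Complex.re_ofReal_mul, Nat.factorial_succ]
    push_cast
    ring

/-- Series representation of the derivatives of `tanh(πξ/2)`:
for every `n` and real `ξ`, the series
`Σ_{k≥1} [(ξ + i(2k−1))^{−(n+1)} + (ξ − i(2k−1))^{−(n+1)}]` converges in `ℂ`, its sum is
real, and
`dⁿ/dξⁿ tanh(πξ/2) = (−1)ⁿ n! (2/π) Σ_{k≥1} [(ξ+i(2k−1))^{−(n+1)} + (ξ−i(2k−1))^{−(n+1)}]`. -/
theorem tanh_iteratedDeriv_series (n : ℕ) (ξ : ℝ) :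
    Summable (fun k : ℕ =>
      ((ξ : ℂ) + Complex.I * (2 * (k + 1) - 1)) ^ (-((n : ℤ) + 1)) +
      ((ξ : ℂ) - Complex.I * (2 * (k + 1) - 1)) ^ (-((n : ℤ) + 1))) ∧
    (∑' k : ℕ,
        (((ξ : ℂ) + Complex.I * (2 * (k + 1) - 1)) ^ (-((n : ℤ) + 1)) +
         ((ξ : ℂ) - Complex.I * (2 * (k + 1) - 1)) ^ (-((n : ℤ) + 1)))).im = 0 ∧
    ((iteratedDeriv n (fun x : ℝ => Real.tanh (Real.pi * x / 2)) ξ : ℝ) : ℂ)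
      = (-1) ^ n * (Nat.factorial n : ℂ) * (2 / Real.pi) *
        ∑' k : ℕ,
          (((ξ : ℂ) + Complex.I * (2 * (k + 1) - 1)) ^ (-((n : ℤ) + 1)) +
           ((ξ : ℂ) - Complex.I * (2 * (k + 1) - 1)) ^ (-((n : ℤ) + 1))) := by
  refine ⟨tT_summable n ξ, tT_tsum_im n ξ, ?_⟩
  change _ = _ * ∑' k, tT n k ξ
  rw [tT_main]
  have : ((∑' k, tT n k ξ).re : ℂ) = ∑' k, tT n k ξ :=
    Complex.ext (by simp) (by simp [tT_tsum_im])
  push_cast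
  rw [this]
end

section
/- For every ξ ∈ ℝ with ξ ≠ 0, the series Σ_{k=1}^∞ 1/(4k² + ξ²) converges and coth(πξ/2) − 2/(πξ) = (4ξ/π) · Σ_{k=1}^∞ 1/(4k² + ξ²). -/
open Real

/-- Fractional series expansion of the hyperbolic cotangent: for every
`ξ ≠ 0`, the series `Σ_{k≥1} 1/(4k² + ξ²)` converges and
`coth(πξ/2) − 2/(πξ) = (4ξ/π) Σ_{k≥1} 1/(4k² + ξ²)`, where `coth x = cosh x / sinh x`. -/
theorem coth_fractional_series (ξ : ℝ) (hξ : ξ ≠ 0) :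
    Summable (fun k : ℕ => 1 / (4 * ((k + 1 : ℝ)) ^ 2 + ξ ^ 2)) ∧
    Real.cosh (Real.pi * ξ / 2) / Real.sinh (Real.pi * ξ / 2) - 2 / (Real.pi * ξ)
      = (4 * ξ / Real.pi) * ∑' k : ℕ, 1 / (4 * ((k + 1 : ℝ)) ^ 2 + ξ ^ 2) := by
  have hx : ((ξ / 2 : ℝ) * Complex.I : ℂ) ∈ Complex.integerComplement := by
    rintro ⟨n, hn⟩
    have := congrArg Complex.im hn
    simp at this
    exact hξ (by linarith)
  have hI := Complex.I_sq
  have hξc : (ξ : ℂ) ≠ 0 := by exact_mod_cast hξ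
  have hterm : ∀ n : ℕ, 1 / (((ξ / 2 : ℝ) * Complex.I : ℂ) - (n + 1))
      + 1 / (((ξ / 2 : ℝ) * Complex.I : ℂ) + (n + 1))
      = (-4 * ξ * Complex.I) * ((1 / (4 * ((n + 1 : ℝ)) ^ 2 + ξ ^ 2) : ℝ) : ℂ) := by
    intro n
    have h1 : ((ξ / 2 : ℝ) * Complex.I : ℂ) + (n + 1) ≠ 0 := by
      intro h
      have := congrArg Complex.im h
      simp at this
      exact hξ this
    have h2 : ((ξ / 2 : ℝ) * Complex.I : ℂ) - (n + 1) ≠ 0 := by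
      intro h
      have := congrArg Complex.im h
      simp at this
      exact hξ this
    have h3 : (4 * ((n + 1 : ℂ)) ^ 2 + (ξ : ℂ) ^ 2) ≠ 0 := by
      have : (4 * ((n + 1 : ℝ)) ^ 2 + ξ ^ 2) ≠ 0 := by positivity
      exact_mod_cast this
    rw [div_add_div _ _ h2 h1]
    push_cast at h1 h2 ⊢
    rw [mul_one_div, div_eq_div_iff (mul_ne_zero h2 h1) h3]
    linear_combination ((ξ : ℂ) ^ 3 * Complex.I) * hI
  have hc : (-4 * ξ * Complex.I : ℂ) ≠ 0 := by simp [hξ]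
  have hs := summable_cotTerm hx
  have hr := cot_series_rep' hx
  simp only [cotTerm, hterm] at hs hr
  refine ⟨Complex.summable_ofReal.mp ((summable_mul_left_iff hc).mp hs), ?_⟩
  rw [tsum_mul_left, ← Complex.ofReal_tsum] at hr
  generalize (∑' k : ℕ, 1 / (4 * ((k + 1 : ℝ)) ^ 2 + ξ ^ 2)) = S at hr ⊢
  have hy : (π : ℂ) * ((ξ / 2 : ℝ) * Complex.I) = ((π * ξ / 2 : ℝ) : ℂ) * Complex.I := by
    push_cast; ring
  rw [hy, Complex.cot, Complex.cos_mul_I, Complex.sin_mul_I, ← Complex.ofReal_cosh,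
    ← Complex.ofReal_sinh] at hr
  have hsh : Real.sinh (π * ξ / 2) ≠ 0 := by
    rw [Ne, Real.sinh_eq_zero]
    have := Real.pi_ne_zero
    positivity
  generalize Real.sinh (π * ξ / 2) = s at *
  generalize Real.cosh (π * ξ / 2) = c at *
  have hsc : (s : ℂ) ≠ 0 := by exact_mod_cast hsh
  have hp : (π : ℂ) ≠ 0 := by exact_mod_cast Real.pi_ne_zero
  have key : ((c / s - 2 / (π * ξ) : ℝ) : ℂ) = ((4 * ξ / π * S : ℝ) : ℂ) := by
    have hI0 := Complex.I_ne_zero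
    have e : (π : ℂ) * (c / (s * Complex.I)) - 1 / ((ξ / 2 : ℝ) * Complex.I)
        = -Complex.I * (π * (c / s - 2 / (π * ξ))) := by
      push_cast
      field_simp
      rw [hI]; ring
    rw [e] at hr
    have h5 : (π : ℂ) * (c / s - 2 / (π * ξ)) = 4 * ξ * S := by
      apply mul_left_cancel₀ (neg_ne_zero.mpr hI0)
      rw [hr]; ring
    push_cast
    apply mul_left_cancel₀ hp
    rw [h5]; field_simp
  exact_mod_cast key
end

section
/- Let μ ∈ (0,1], δ > 0, M > 0 and ε ∈ (0,1). Let κ : [−δ,δ] → ℝ be differentiable with κ(0) = κ′(0) = 0, twice differentiable on [−δ,δ]\{0}, and suppose |κ″(x)| ≤ M|x|^{μ−1} for all x ∈ [−δ,δ]\{0}. Set z(x) = x + iκ(x) ∈ ℂ. Then there exists a constant C > 0, depending only on M, ε and μ, such that for every x ∈ (0,δ] and every u ∈ [(1−ε)x, (1+ε)x] ∩ [−δ,δ] with u ≠ x, | (1 + iκ′(x)) / (z(x) − z(u)) − 1/(x−u) | ≤ C x^{μ−1}. (This is the near-diagonal kernel estimate for the Cauchy kernel on one branch of a curve near a cusp: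 the Birkhoff–Rott kernel equals the Hilbert-transform kernel plus an error of size O(x^{μ−1}).) -/
open Real Set Complex

/-- Near-diagonal kernel estimate on one branch of a curve near a cusp:
for a graph `z(x) = x + iκ(x)` with `κ(0) = κ′(0) = 0` and `|κ″| ≤ M|x|^{μ−1}`, the
Cauchy kernel `(1+iκ′(x))/(z(x)−z(u))` equals the Hilbert-transform kernel `1/(x−u)` up
to an error of size `C x^{μ−1}` for `u` comparable to `x`, with `C = C(M, ε, μ)`. -/
theorem near_diagonal_kernel_estimate
    (μ M ε : ℝ) (hμ : μ ∈ Set.Ioc (0 : ℝ) 1) (hM : 0 < M) (hε : ε ∈ Set.Ioo (0 : ℝ) 1) :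
    ∃ C : ℝ, 0 < C ∧
      ∀ (δ : ℝ), 0 < δ →
      ∀ (κ κ' κ'' : ℝ → ℝ),
        (∀ x ∈ Icc (-δ) δ, HasDerivAt κ (κ' x) x) →
        κ 0 = 0 → κ' 0 = 0 →
        (∀ x ∈ Icc (-δ) δ, x ≠ 0 → HasDerivAt κ' (κ'' x) x) →
        (∀ x ∈ Icc (-δ) δ, x ≠ 0 → |κ'' x| ≤ M * |x| ^ (μ - 1)) →
        ∀ x ∈ Ioc (0 : ℝ) δ,
        ∀ u ∈ Icc ((1 - ε) * x) ((1 + ε) * x) ∩ Icc (-δ) δ, u ≠ x →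
          ‖(1 + Complex.I * (κ' x)) /
              (((x : ℂ) + Complex.I * κ x) - ((u : ℂ) + Complex.I * κ u)) -
            1 / ((x : ℂ) - (u : ℂ))‖ ≤ C * x ^ (μ - 1) := by
  obtain ⟨hμ0, hμ1⟩ := hμ
  obtain ⟨hε0, hε1⟩ := hε
  have h1ε : 0 < 1 - ε := by linarith
  refine ⟨M * (1 - ε) ^ (μ - 1), by positivity, ?_⟩
  intro δ hδ κ κ' κ'' hκ _ _ hκ' hb x hx u hu hux
  obtain ⟨hx0, hxδ⟩ := hx
  set K := M * (1 - ε) ^ (μ - 1) * x ^ (μ - 1) with hK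
  have hK0 : 0 ≤ K := by positivity
  set S := Icc ((1 - ε) * x) ((1 + ε) * x) ∩ Icc (-δ) δ with hS
  have hSc : Convex ℝ S := (convex_Icc _ _).inter (convex_Icc _ _)
  have hxS : x ∈ S := ⟨⟨by nlinarith, by nlinarith⟩, by linarith, hxδ⟩
  have hlow : 0 < (1 - ε) * x := by positivity
  have hpos : ∀ t ∈ S, 0 < t := fun t ht => lt_of_lt_of_le hlow ht.1.1
  have hL : ∀ t ∈ S, ‖κ' t - κ' x‖ ≤ K * ‖t - x‖ := by
    intro t ht
    refine hSc.norm_image_sub_le_of_norm_hasDerivWithin_le (f' := κ'')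
      (fun y hy => (hκ' y hy.2 (hpos y hy).ne').hasDerivWithinAt) ?_ hxS ht
    intro y hy
    have h1 := hb y hy.2 (hpos y hy).ne'
    rw [abs_of_pos (hpos y hy)] at h1
    have h2 : y ^ (μ - 1) ≤ ((1 - ε) * x) ^ (μ - 1) :=
      Real.rpow_le_rpow_of_nonpos hlow hy.1.1 (by linarith)
    rw [Real.mul_rpow h1ε.le hx0.le] at h2
    rw [Real.norm_eq_abs, hK, mul_assoc]
    exact h1.trans (mul_le_mul_of_nonneg_left h2 hM.le)
  have hsub : uIcc u x ⊆ S := by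
    rw [← segment_eq_uIcc]; exact hSc.segment_subset hu hxS
  have hN : ‖(κ x - κ' x * x) - (κ u - κ' x * u)‖ ≤ K * ‖u - x‖ * ‖x - u‖ := by
    refine (convex_uIcc u x).norm_image_sub_le_of_norm_hasDerivWithin_le
      (f := fun t => κ t - κ' x * t) (f' := fun t => κ' t - κ' x) ?_ ?_
      left_mem_uIcc right_mem_uIcc
    · intro y hy
      have := ((hκ y (hsub hy).2).sub ((hasDerivAt_id y).const_mul (κ' x))).hasDerivWithinAt
        (s := uIcc u x)
      simp only [id, mul_one] at this
      exact this
    · intro y hy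
      refine (hL y (hsub hy)).trans (mul_le_mul_of_nonneg_left ?_ hK0)
      rw [Real.norm_eq_abs, Real.norm_eq_abs, abs_sub_comm y x, abs_sub_comm u x]
      exact abs_sub_right_of_mem_uIcc hy
  have hxu : 0 < |x - u| := abs_pos.2 (sub_ne_zero.2 hux.symm)
  set w : ℂ := ((x : ℂ) + Complex.I * κ x) - ((u : ℂ) + Complex.I * κ u) with hw
  have hwn : |x - u| ≤ ‖w‖ := by
    have h := Complex.abs_re_le_norm w
    simpa [hw] using h
  have hw0 : w ≠ 0 := norm_pos_iff.1 (hxu.trans_le hwn)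
  have hd0 : (x : ℂ) - u ≠ 0 := by
    rw [← Complex.ofReal_sub]; exact_mod_cast sub_ne_zero.2 hux.symm
  have hkey : (1 + Complex.I * (κ' x)) / w - 1 / ((x : ℂ) - (u : ℂ)) =
      -Complex.I * (((κ x - κ' x * x) - (κ u - κ' x * u) : ℝ) : ℂ) / (w * ((x - u : ℝ) : ℂ)) := by
    rw [div_sub_div _ _ hw0 hd0]
    push_cast
    congr 1
    rw [hw]; ring
  rw [hkey, norm_div, norm_mul, norm_mul, norm_neg, Complex.norm_I, one_mul, Complex.norm_real,
    Complex.norm_real, div_le_iff₀ (by rw [Real.norm_eq_abs]; positivity)]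
  refine hN.trans ?_
  rw [norm_sub_rev u x, mul_assoc, Real.norm_eq_abs]
  exact mul_le_mul_of_nonneg_left (mul_le_mul_of_nonneg_right hwn hxu.le) hK0
end

section
/- Let ω ∈ L¹((−π,π); ℂ) and let z : (−π,π) → ℂ be measurable with sup_{α} |Im z(α)| < ∞. Then the periodic Birkhoff–Rott integral BR*(ζ) := (1/(4πi)) ∫_{−π}^{π} ω(α) cot((ζ − z(α))/2) dα satisfies: for every ε > 0 there is T > 0 such that |BR*(ζ) + (1/(4π)) ∫_{−π}^{π} ω(α) dα| ≤ ε whenever Im ζ ≥ T, and |BR*(ζ) − (1/(4π)) ∫_{−π}^{π} ω(α) dα| ≤ ε whenever Im ζ ≤ −T. That is, BR*(ζ) → ∓(1/(4π))∫ω as Im ζ → ±∞, uniformly in Re ζ. -/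
open Real Set Complex MeasureTheory Filter

/-- The periodic Birkhoff–Rott integral (complex conjugate form)
`BR*(ζ) = (1/(4πi)) ∫_{−π}^{π} ω(α) cot((ζ − z(α))/2) dα`. -/
noncomputable def periodicBR (ω : ℝ → ℂ) (z : ℝ → ℂ) (ζ : ℂ) : ℂ :=
  (4 * Real.pi * Complex.I)⁻¹ *
    ∫ α in Ioo (-Real.pi) Real.pi, ω α * Complex.cot ((ζ - z α) / 2)

theorem cot_add_I_bound (s : ℂ) (hs : 0 < s.im) : ‖Complex.cot s + Complex.I‖ ≤ 1 / s.im := by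
  set w := Complex.exp (s * Complex.I) with hw
  set v := Complex.exp (-s * Complex.I) with hv
  have nw : ‖w‖ = Real.exp (-s.im) := by simp [hw, Complex.norm_exp]
  have nv : ‖v‖ = Real.exp (s.im) := by simp [hv, Complex.norm_exp]
  have h1 : Real.exp (s.im) * Real.exp (-s.im) = 1 := by rw [← Real.exp_add]; simp
  have hp := Real.exp_pos (-s.im)
  have hlt : Real.exp (-s.im) < Real.exp s.im := Real.exp_lt_exp.2 (by linarith)
  have hvw : Real.exp s.im - Real.exp (-s.im) ≤ ‖v - w‖ := by
    rw [← nw, ← nv]; exact norm_sub_norm_le v w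
  have hne : v - w ≠ 0 := by
    rw [← norm_pos_iff]; linarith
  have e : Complex.cot s + Complex.I = 2 * w / ((v - w) * Complex.I) := by
    rw [Complex.cot_eq_cos_div_sin, Complex.cos, Complex.sin, ← hw, ← hv]
    have hI := Complex.I_sq
    field_simp
    linear_combination (v - w) * hI
  rw [e, norm_div, norm_mul, norm_mul, nw, Complex.norm_I, mul_one, Complex.norm_two,
    div_le_div_iff₀ (by linarith) hs]
  have h2 : 1 + 2 * s.im ≤ Real.exp s.im * Real.exp s.im := by
    rw [← Real.exp_add]; linarith [Real.add_one_le_exp (s.im + s.im)]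
  have h3 := mul_le_mul_of_nonneg_right h2 hp.le
  have h4 : Real.exp s.im * Real.exp s.im * Real.exp (-s.im) = Real.exp s.im := by
    rw [mul_assoc, h1, mul_one]
  linarith

theorem cot_sub_I_bound (s : ℂ) (hs : s.im < 0) : ‖Complex.cot s - Complex.I‖ ≤ 1 / (-s.im) := by
  have h := cot_add_I_bound (-s) (by simpa using hs)
  have e : Complex.cot (-s) + Complex.I = -(Complex.cot s - Complex.I) := by
    rw [Complex.cot_eq_cos_div_sin, Complex.cot_eq_cos_div_sin, Complex.cos_neg, Complex.sin_neg,
      div_neg]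
    ring
  rwa [e, norm_neg, Complex.neg_im] at h

theorem BR_aux (ω : ℝ → ℂ) (z : ℝ → ℂ) (hω : IntegrableOn ω (Ioo (-Real.pi) Real.pi))
    (hz : Measurable z) (ζ c : ℂ) (δ : ℝ)
    (hb : ∀ α ∈ Ioo (-Real.pi) Real.pi, ‖Complex.cot ((ζ - z α) / 2) - c‖ ≤ δ) :
    ‖periodicBR ω z ζ - (4 * Real.pi : ℂ)⁻¹ * (c / Complex.I) *
      ∫ α in Ioo (-Real.pi) Real.pi, ω α‖ ≤ δ * ∫ α in Ioo (-Real.pi) Real.pi, ‖ω α‖ := by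
  have hm : Measurable fun α => Complex.cot ((ζ - z α) / 2) - c := by
    simp only [Complex.cot_eq_cos_div_sin]
    fun_prop
  have hae : ∀ᵐ α ∂(volume.restrict (Ioo (-Real.pi) Real.pi)),
      ‖Complex.cot ((ζ - z α) / 2) - c‖ ≤ δ :=
    (ae_restrict_iff' measurableSet_Ioo).2 (Eventually.of_forall hb)
  have hi : IntegrableOn (fun α => ω α * (Complex.cot ((ζ - z α) / 2) - c))
      (Ioo (-Real.pi) Real.pi) :=
    Integrable.mul_bdd hω hm.aestronglyMeasurable hae
  have e : ∫ α in Ioo (-Real.pi) Real.pi, ω α * Complex.cot ((ζ - z α) / 2)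
      = (∫ α in Ioo (-Real.pi) Real.pi, ω α * (Complex.cot ((ζ - z α) / 2) - c))
        + (∫ α in Ioo (-Real.pi) Real.pi, ω α) * c := by
    rw [← integral_mul_const, ← integral_add hi (hω.mul_const c)]
    congr 1
    ext α
    ring
  have e2 : periodicBR ω z ζ - (4 * Real.pi : ℂ)⁻¹ * (c / Complex.I) *
      ∫ α in Ioo (-Real.pi) Real.pi, ω α = (4 * Real.pi * Complex.I)⁻¹ *
      ∫ α in Ioo (-Real.pi) Real.pi, ω α * (Complex.cot ((ζ - z α) / 2) - c) := by
    rw [periodicBR, e, mul_inv, div_eq_mul_inv]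
    ring
  have hn : ‖(4 * Real.pi * Complex.I : ℂ)⁻¹‖ ≤ 1 := by
    rw [norm_inv, norm_mul, norm_mul, Complex.norm_I, Complex.norm_real,
      Real.norm_of_nonneg Real.pi_pos.le]
    apply inv_le_one_of_one_le₀
    norm_num
    linarith [Real.pi_gt_three]
  rw [e2, norm_mul]
  refine (mul_le_of_le_one_left (norm_nonneg _) hn).trans ?_
  rw [← integral_const_mul]
  refine norm_integral_le_of_norm_le (hω.norm.const_mul δ) ?_
  filter_upwards [hae] with α h
  rw [norm_mul, mul_comm]
  exact mul_le_mul_of_nonneg_right h (norm_nonneg _)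

/-- If `ω ∈ L¹((−π,π);ℂ)` and `z` is measurable with uniformly bounded
imaginary part, then `BR*(ζ) → ∓(1/(4π))∫ω` as `Im ζ → ±∞`, uniformly in `Re ζ`. -/
theorem periodicBR_limit_at_infinity
    (ω : ℝ → ℂ) (z : ℝ → ℂ)
    (hω : IntegrableOn ω (Ioo (-Real.pi) Real.pi))
    (hz : Measurable z)
    (hzIm : ∃ B : ℝ, ∀ α ∈ Ioo (-Real.pi) Real.pi, |(z α).im| ≤ B) :
    ∀ ε : ℝ, 0 < ε → ∃ T : ℝ, 0 < T ∧
      (∀ ζ : ℂ, T ≤ ζ.im →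
        ‖periodicBR ω z ζ +
          (4 * Real.pi : ℂ)⁻¹ * ∫ α in Ioo (-Real.pi) Real.pi, ω α‖ ≤ ε) ∧
      (∀ ζ : ℂ, ζ.im ≤ -T →
        ‖periodicBR ω z ζ -
          (4 * Real.pi : ℂ)⁻¹ * ∫ α in Ioo (-Real.pi) Real.pi, ω α‖ ≤ ε) := by
  obtain ⟨B, hB⟩ := hzIm
  intro ε hε
  set M := ∫ α in Ioo (-Real.pi) Real.pi, ‖ω α‖ with hM
  have hM0 : 0 ≤ M := integral_nonneg fun _ => norm_nonneg _
  set δ := ε / (M + 1) with hδ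
  have hδ0 : 0 < δ := by positivity
  have hδM : δ * M ≤ ε := by
    rw [hδ, div_mul_eq_mul_div, div_le_iff₀ (by positivity)]
    nlinarith
  have hd : 0 < 1 / δ := by positivity
  have key : ∀ y : ℝ, 1 / δ ≤ y → 1 / y ≤ δ := fun y hy => by
    rw [one_div_le (hd.trans_le hy) hδ0]; exact hy
  refine ⟨|B| + 2 * (1 / δ), by positivity, fun ζ hζ => ?_, fun ζ hζ => ?_⟩
  · have h := BR_aux ω z hω hz ζ (-Complex.I) δ (fun α hα => by
      have h1 := abs_le.1 ((hB α hα).trans (le_abs_self B))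
      have h2 : ((ζ - z α) / 2).im = (ζ.im - (z α).im) / 2 := by simp
      have h3 : 1 / δ ≤ ((ζ - z α) / 2).im := by rw [h2]; linarith
      rw [sub_neg_eq_add]
      exact (cot_add_I_bound _ (hd.trans_le h3)).trans (key _ h3))
    rw [neg_div, div_self Complex.I_ne_zero] at h
    refine le_trans (le_of_eq ?_) (h.trans hδM)
    congr 1
    ring
  · have h := BR_aux ω z hω hz ζ Complex.I δ (fun α hα => by
      have h1 := abs_le.1 ((hB α hα).trans (le_abs_self B))
      have h2 : ((ζ - z α) / 2).im = (ζ.im - (z α).im) / 2 := by simp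
      have h3 : 1 / δ ≤ -((ζ - z α) / 2).im := by rw [h2]; linarith
      exact (cot_sub_I_bound _ (by linarith)).trans (key _ h3))
    rw [div_self Complex.I_ne_zero, mul_one] at h
    exact h.trans hδM
end
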